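/- Let X be a complemented subspace of X_p, let Z be a subspace of X, and let ε, β, β' be positive constants with ε ≤ 1 such that (a) r(z) ≥ β' for all nonzero z ∈ Z, and (b) for every x ∈ X with r(x) > β there exists z ∈ Z with |x − z|_2 < ε·|x|_2. Then X is isomorphic to a complemented subspace of ℓ_p ⊕ ℓ_2. -/

import Mathlib

open scoped ENNReal

noncomputable section

/-- The sequence space `ℓ_p` (of real sequences), for a real exponent `p`. -/
abbrev SeqP (p : ℝ) := lp (fun _ : ℕ => ℝ) (ENNReal.ofReal p)

/-- The sequence space `ℓ_2` (of real sequences). -/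
abbrev Seq2 := lp (fun _ : ℕ => ℝ) 2

/-- The space `X_{p,w}`, realized as the submodule of `ℓ_p ⊕_∞ ℓ_2` consisting of the
pairs `(x, y)` with `y n = w n * x n`.  Since the norm on the product is the maximum of
the two norms, this is exactly the completion of the finitely supported sequences under
`‖a‖ = max {|a|_p, |a|_{2,w}}`, the element with coordinates `a` being identified with
the pair `(a, w·a)`. -/
def XpwMod (p : ℝ) (w : ℕ → ℝ) : Submodule ℝ (SeqP p × Seq2) where
  carrier := {z | ∀ n, (z.2 : ℕ → ℝ) n = w n * (z.1 : ℕ → ℝ) n}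
  add_mem' := by
    intro a b ha hb n
    simp only [Prod.fst_add, Prod.snd_add, lp.coeFn_add, Pi.add_apply, ha n, hb n]
    ring
  zero_mem' := by
    intro n
    simp
  smul_mem' := by
    intro c a ha n
    simp only [Prod.smul_fst, Prod.smul_snd, lp.coeFn_smul, Pi.smul_apply, ha n,
      smul_eq_mul]
    ring

/-- The space `X_{p,w}` with its natural norm `‖a‖ = max {|a|_p, |a|_{2,w}}`. -/
def Xpw (p : ℝ) (w : ℕ → ℝ) : Type := ↥(XpwMod p w)

variable {p : ℝ} {w : ℕ → ℝ}

instance [Fact (1 ≤ ENNReal.ofReal p)] : NormedAddCommGroup (Xpw p w) :=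
  inferInstanceAs (NormedAddCommGroup ↥(XpwMod p w))

instance [Fact (1 ≤ ENNReal.ofReal p)] : NormedSpace ℝ (Xpw p w) :=
  inferInstanceAs (NormedSpace ℝ ↥(XpwMod p w))

/-- The pair of coordinates (in `ℓ_p` and in weighted `ℓ_2`) of an element of `X_{p,w}`. -/
def Xpw.pair (x : Xpw p w) : SeqP p × Seq2 := (show ↥(XpwMod p w) from x).val

/-- The underlying sequence of coordinates of an element of `X_{p,w}`. -/
def seq (x : Xpw p w) : ℕ → ℝ := (Xpw.pair x).1

/-- `|x|_p` for `x ∈ X_{p,w}`. -/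
def nrmP (x : Xpw p w) : ℝ := ‖(Xpw.pair x).1‖

/-- `|x|_2 = |x|_{2,w}` for `x ∈ X_{p,w}`. -/
def nrm2 (x : Xpw p w) : ℝ := ‖(Xpw.pair x).2‖

/-- The ratio `r(x) = |x|_2 / |x|_p`. -/
def ratio (x : Xpw p w) : ℝ := nrm2 x / nrmP x

/-- `ω(E) = ∑_{n ∈ E} w_n^{2p/(p-2)}`. -/
def omegaE (p : ℝ) (w : ℕ → ℝ) (E : Set ℕ) : ℝ :=
  ∑' n : E, w (n : ℕ) ^ (2 * p / (p - 2))

/-- The pairing `⟨x, y⟩ = ∑_n x_n y_n w_n²`. -/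
def pairW (w : ℕ → ℝ) (x y : Xpw p w) : ℝ :=
  ∑' n, seq x n * seq y n * w n ^ 2

/-- `w` is a weight sequence suitable for Rosenthal's space `X_p`: it is positive and for
every `ε > 0`, `∑_{w_n < ε} w_n^{2p/(p-2)} = ∞`. -/
def IsXpWeight (p : ℝ) (w : ℕ → ℝ) : Prop :=
  (∀ n, 0 < w n) ∧
    ∀ ε : ℝ, 0 < ε →
      (∑' n : {n : ℕ | w n < ε}, ENNReal.ofReal (w (n : ℕ) ^ (2 * p / (p - 2)))) = ⊤

theorem memℓp_indicator {q : ℝ≥0∞} (E : Set ℕ) {f : ℕ → ℝ} (hf : Memℓp f q) :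
    Memℓp (E.indicator f) q := by
  rcases ENNReal.trichotomy q with hq | hq | hq
  · subst hq
    refine memℓp_zero ((memℓp_zero_iff.mp hf).subset ?_)
    intro i hi
    simp only [Set.mem_setOf_eq] at hi ⊢
    intro h
    exact hi (by simp [Set.indicator_apply, h])
  · subst hq
    obtain ⟨C, hC⟩ := (memℓp_infty_iff.mp hf)
    refine memℓp_infty ⟨C, ?_⟩
    rintro x ⟨i, rfl⟩
    exact le_trans (norm_indicator_le_norm_self f i) (hC ⟨i, rfl⟩)
  · refine memℓp_gen (Summable.of_nonneg_of_le (fun i => ?_) (fun i => ?_)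
      (hf.summable hq))
    · positivity
    · exact Real.rpow_le_rpow (norm_nonneg _) (norm_indicator_le_norm_self f i) hq.le

/-- The restriction `x ↦ x_{|E}` of elements of `X_{p,w}` to a set `E` of coordinates. -/
def restrict (E : Set ℕ) (x : Xpw p w) : Xpw p w :=
  show ↥(XpwMod p w) from
  ⟨(⟨E.indicator ((Xpw.pair x).1 : ℕ → ℝ), memℓp_indicator E (lp.memℓp (Xpw.pair x).1)⟩,
    ⟨E.indicator ((Xpw.pair x).2 : ℕ → ℝ), memℓp_indicator E (lp.memℓp (Xpw.pair x).2)⟩), by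
    intro n
    by_cases hn : n ∈ E
    · have h : ((Xpw.pair x).2 : ℕ → ℝ) n = w n * ((Xpw.pair x).1 : ℕ → ℝ) n :=
        (show ↥(XpwMod p w) from x).2 n
      simpa [Set.indicator_of_mem hn] using h
    · simp [Set.indicator_of_notMem hn]⟩

/-!
Rosenthal's inequality makes a finite block of `X_{p,w}` isomorphic, uniformly in the block and in
the weights, to the span in `L_p` of a finite probability space of independent symmetric random
variables with prescribed second and `p`-th moments. The orthogonal projection onto this span is
bounded on `L_p` by the dual inequality, so the identity of each block factors through some
`ℓ_p^N`, and the constants do not depend on the block.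

Let `Y` be the set of `x ∈ X` with `w · x` orthogonal to `w · Z`. Condition (b) with `ε ≤ 1`
forces `|y|_2 ≤ β |y|_p` on `Y`. As in Pitt's theorem, the `|·|_p`-unit ball of `Y` is then
totally bounded for `|·|_2`, so that `|y|_2` has uniformly small tails on `Y`. Cut `ℕ` into finite
blocks along which these tails decay like `4⁻ᵏ`: the factorizations of the blocks for the weights
`2ᵏ w` glue to a factorization of the inclusion of `Y` in `X_{p,w}` through `ℓ_p`. The factor `2ᵏ`
is harmless on `Y` and makes the glued operator from `ℓ_p` to the weighted `ℓ_2` bounded.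

By (a) the norm of `X_{p,w}` is equivalent to `|·|_2` on the closure of `Z`. Orthogonal projection
in `ℓ_2` therefore splits `X` into `Y` and this closure, and the latter contributes the summand
`ℓ_2`.
-/

section SignedPower

theorem sum_rpow_le_rpow_sum {ι : Type*} {r : ℝ} (hr : 1 ≤ r) (s : Finset ι) {a : ι → ℝ}
    (ha : ∀ i, 0 ≤ a i) : ∑ i ∈ s, a i ^ r ≤ (∑ i ∈ s, a i) ^ r := by
  classical
  induction s using Finset.induction_on with
  | empty => simp [Real.zero_rpow (show r ≠ 0 by linarith)]
  | insert i s hi ih =>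
    rw [Finset.sum_insert hi, Finset.sum_insert hi]
    calc a i ^ r + ∑ j ∈ s, a j ^ r ≤ a i ^ r + (∑ j ∈ s, a j) ^ r := by gcongr
      _ ≤ _ := Real.add_rpow_le_rpow_add (ha i) (Finset.sum_nonneg fun j _ ↦ ha j) hr

/-- The signed power `t ↦ sign t * |t| ^ r`, for `0 < r`. Up to a constant, `signedRPow (r - 1)` is
the derivative of `|·| ^ r`, and it turns a vector of `ℓ_r` into its norming functional. -/
def signedRPow (r t : ℝ) : ℝ := t⁺ ^ r - t⁻ ^ r

variable {r : ℝ}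

theorem signedRPow_of_nonneg (hr : 0 < r) {t : ℝ} (ht : 0 ≤ t) : signedRPow r t = t ^ r := by
  simp [signedRPow, posPart_of_nonneg ht, negPart_of_nonneg ht, Real.zero_rpow hr.ne']

theorem signedRPow_neg (r t : ℝ) : signedRPow r (-t) = -signedRPow r t := by
  simp [signedRPow]

theorem abs_signedRPow (hr : 0 < r) (t : ℝ) : |signedRPow r t| = |t| ^ r := by
  wlog ht : 0 ≤ t generalizing t
  · simpa [signedRPow_neg] using this (-t) (by linarith)
  rw [signedRPow_of_nonneg hr ht, abs_of_nonneg ht, abs_of_nonneg (by positivity)]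

theorem continuous_signedRPow (hr : 0 < r) : Continuous (signedRPow r) := by
  unfold signedRPow
  exact (continuous_posPart.rpow_const fun _ ↦ .inr hr.le).sub
    (continuous_negPart.rpow_const fun _ ↦ .inr hr.le)

theorem signedRPow_mul_self (hr : 0 < r) (t : ℝ) : signedRPow r t * t = |t| ^ (r + 1) := by
  wlog ht : 0 ≤ t generalizing t
  · simpa [signedRPow_neg] using this (-t) (by linarith)
  rw [signedRPow_of_nonneg hr ht, abs_of_nonneg ht, Real.rpow_add_one' ht (by positivity)]

theorem abs_rpow_add_mul_signedRPow_le (hp : 1 < p) (s x : ℝ) :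
    |s| ^ p + p * signedRPow (p - 1) s * x ≤ |s + x| ^ p := by
  have hp₁ : 0 < p - 1 := by linarith
  wlog hs : 0 ≤ s generalizing s x
  · simpa only [signedRPow_neg, abs_neg, mul_neg, neg_mul, neg_neg, ← neg_add] using
      this (-s) (-x) (by linarith)
  rw [signedRPow_of_nonneg hp₁ hs, abs_of_nonneg hs]
  rcases hs.eq_or_lt with rfl | hs
  · have : 0 ≤ |x| ^ p := by positivity
    simpa [Real.zero_rpow hp₁.ne', Real.zero_rpow (show p ≠ 0 by linarith)]
  obtain ⟨u, rfl⟩ : ∃ u, x = s * u := ⟨x / s, by field_simp⟩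
  have bernoulli : 1 + p * u ≤ |1 + u| ^ p := by
    rcases le_total (-1) u with hu | hu
    · rw [abs_of_nonneg (by linarith)]
      exact one_add_mul_self_le_rpow_one_add hu hp.le
    · exact le_trans (by nlinarith) (by positivity : (0 : ℝ) ≤ |1 + u| ^ p)
  calc s ^ p + p * s ^ (p - 1) * (s * u) = s ^ p * (1 + p * u) := by
        rw [Real.rpow_sub_one hs.ne']; field_simp
    _ ≤ s ^ p * |1 + u| ^ p := by gcongr
    _ = |s + s * u| ^ p := by
        rw [← mul_one_add, abs_mul, abs_of_pos hs, Real.mul_rpow hs.le (abs_nonneg _)]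

theorem rpow_sub_rpow_le (hr : 1 ≤ r) {a b : ℝ} (hb : 0 ≤ b) (hab : b ≤ a) :
    a ^ r - b ^ r ≤ r * a ^ (r - 1) * (a - b) := by
  rcases hr.eq_or_lt with rfl | hr
  · simp
  have tangent := abs_rpow_add_mul_signedRPow_le hr a (b - a)
  rw [signedRPow_of_nonneg (sub_pos.2 hr) (hb.trans hab), add_sub_cancel, abs_of_nonneg hb,
    abs_of_nonneg (hb.trans hab)] at tangent
  linarith

theorem abs_signedRPow_sub_le_of_one_le (hr : 1 ≤ r) (a b : ℝ) :
    |signedRPow r a - signedRPow r b| ≤ r * (|a| ^ (r - 1) + |b| ^ (r - 1)) * |a - b| := by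
  have hr₀ : 0 < r := by linarith
  wlog hab : |b| ≤ |a| generalizing a b
  · simpa only [abs_sub_comm, add_comm] using this b a (by linarith)
  wlog ha : 0 ≤ a generalizing a b
  · have := this (-a) (-b) (by simpa using hab) (by linarith)
    simpa [signedRPow_neg, neg_add_eq_sub, abs_sub_comm] using this
  rw [abs_of_nonneg ha, signedRPow_of_nonneg hr₀ ha] at *
  rcases le_total 0 b with hb | hb
  · rw [abs_of_nonneg hb] at *
    rw [signedRPow_of_nonneg hr₀ hb, abs_of_nonneg (sub_nonneg.2 hab),
      abs_of_nonneg (sub_nonneg.2 (Real.rpow_le_rpow hb hab hr₀.le))]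
    refine (rpow_sub_rpow_le hr hb hab).trans ?_
    gcongr
    exact le_add_of_nonneg_right (by positivity)
  · obtain ⟨c, rfl⟩ : ∃ c, b = -c := ⟨-b, by ring⟩
    have hc : 0 ≤ c := by linarith
    have power {t : ℝ} (ht : 0 ≤ t) : t ^ r = t ^ (r - 1) * t := by
      rw [← Real.rpow_add_one' ht (by linarith), sub_add_cancel]
    rw [signedRPow_neg, signedRPow_of_nonneg hr₀ hc, abs_neg, abs_of_nonneg hc, sub_neg_eq_add,
      sub_neg_eq_add, abs_of_nonneg (by positivity), abs_of_nonneg (by positivity), power ha,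
      power hc]
    have : 0 ≤ a ^ (r - 1) := by positivity
    have : 0 ≤ c ^ (r - 1) := by positivity
    calc a ^ (r - 1) * a + c ^ (r - 1) * c ≤ 1 * (a ^ (r - 1) + c ^ (r - 1)) * (a + c) := by
          nlinarith [mul_nonneg ‹0 ≤ a ^ (r - 1)› hc, mul_nonneg ‹0 ≤ c ^ (r - 1)› ha]
      _ ≤ r * (a ^ (r - 1) + c ^ (r - 1)) * (a + c) := by gcongr

theorem abs_signedRPow_sub_le_of_le_one (hr₀ : 0 < r) (hr : r ≤ 1) (a b : ℝ) :
    |signedRPow r a - signedRPow r b| ≤ 2 * |a - b| ^ r := by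
  wlog hab : |b| ≤ |a| generalizing a b
  · simpa only [abs_sub_comm] using this b a (by linarith)
  wlog ha : 0 ≤ a generalizing a b
  · have := this (-a) (-b) (by simpa using hab) (by linarith)
    simpa [signedRPow_neg, neg_add_eq_sub, abs_sub_comm] using this
  rw [abs_of_nonneg ha, signedRPow_of_nonneg hr₀ ha] at *
  rcases le_total 0 b with hb | hb
  · rw [abs_of_nonneg hb] at *
    have subadditive := Real.rpow_add_le_add_rpow hb (sub_nonneg.2 hab) hr₀.le hr
    rw [signedRPow_of_nonneg hr₀ hb, abs_of_nonneg (sub_nonneg.2 hab),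
      abs_of_nonneg (sub_nonneg.2 (Real.rpow_le_rpow hb hab hr₀.le))]
    rw [add_sub_cancel] at subadditive
    have : 0 ≤ (a - b) ^ r := Real.rpow_nonneg (sub_nonneg.2 hab) r
    linarith
  · obtain ⟨c, rfl⟩ : ∃ c, b = -c := ⟨-b, by ring⟩
    have hc : 0 ≤ c := by linarith
    rw [signedRPow_neg, signedRPow_of_nonneg hr₀ hc, sub_neg_eq_add, sub_neg_eq_add,
      abs_of_nonneg (by positivity), abs_of_nonneg (by positivity), two_mul]
    gcongr <;> linarith

end SignedPower

/-! ### Moments of sums of independent random variables -/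

section Moments

open MeasureTheory ProbabilityTheory

variable {Ω : Type*} [MeasurableSpace Ω] {P : Measure Ω} {S X : Ω → ℝ}

theorem rpow_mul_rpow_le_rpow_add_rpow {a b s t : ℝ} (ha : 0 ≤ a) (hb : 0 ≤ b) (hp : a + b ≠ 0)
    (hs : 0 ≤ s) (ht : 0 ≤ t) : s ^ a * t ^ b ≤ s ^ (a + b) + t ^ (a + b) := by
  rcases le_total s t with hst | hst
  · calc s ^ a * t ^ b ≤ t ^ a * t ^ b := by gcongr
      _ = t ^ (a + b) := (Real.rpow_add' ht hp).symm
      _ ≤ _ := le_add_of_nonneg_left (by positivity)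
  · calc s ^ a * t ^ b ≤ s ^ a * s ^ b := by gcongr
      _ = s ^ (a + b) := (Real.rpow_add' hs hp).symm
      _ ≤ _ := le_add_of_nonneg_right (by positivity)

theorem integrable_abs_rpow (hp : 0 < p) (hX : MemLp X (.ofReal p) P) :
    Integrable (fun ω ↦ |X ω| ^ p) P := by
  simpa [ENNReal.toReal_ofReal hp.le] using
    hX.integrable_norm_rpow (by simpa using hp) ENNReal.ofReal_ne_top

theorem integrable_abs_rpow_mul_abs_rpow {a b : ℝ} (ha : 0 ≤ a) (hb : 0 ≤ b) (hp : 0 < a + b)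
    (hS : MemLp S (.ofReal (a + b)) P) (hX : MemLp X (.ofReal (a + b)) P) :
    Integrable (fun ω ↦ |S ω| ^ a * |X ω| ^ b) P := by
  refine ((integrable_abs_rpow hp hS).add (integrable_abs_rpow hp hX)).mono' ?_ (ae_of_all _ ?_)
  · exact ((hS.1.aemeasurable.abs.pow_const a).mul
      (hX.1.aemeasurable.abs.pow_const b)).aestronglyMeasurable
  · intro ω
    rw [Real.norm_of_nonneg (by positivity)]
    exact rpow_mul_rpow_le_rpow_add_rpow ha hb hp.ne' (abs_nonneg _) (abs_nonneg _)

theorem integrable_signedRPow_mul (hp : 1 < p) (hS : MemLp S (.ofReal p) P)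
    (hX : MemLp X (.ofReal p) P) : Integrable (fun ω ↦ signedRPow (p - 1) (S ω) * X ω) P := by
  have hp₁ : 0 < p - 1 := sub_pos.2 hp
  have dominating := integrable_abs_rpow_mul_abs_rpow hp₁.le zero_le_one (by linarith)
    (by simpa using hS) (by simpa using hX)
  refine dominating.mono ?_ (ae_of_all _ fun ω ↦ ?_)
  · exact ((continuous_signedRPow hp₁).comp_aestronglyMeasurable hS.1).mul hX.1
  · rw [Real.norm_eq_abs, abs_mul, abs_signedRPow hp₁]
    simp [abs_of_nonneg (show 0 ≤ |S ω| ^ (p - 1) by positivity)]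

theorem integral_abs_rpow_le_rpow_integral [IsProbabilityMeasure P] {a : ℝ} (ha : 0 ≤ a)
    (hap : a ≤ p) (hp : 0 < p) (hX : MemLp X (.ofReal p) P) :
    ∫ ω, |X ω| ^ a ∂P ≤ (∫ ω, |X ω| ^ p ∂P) ^ (a / p) := by
  have power (ω : Ω) : (|X ω| ^ p) ^ (a / p) = |X ω| ^ a := by
    rw [← Real.rpow_mul (abs_nonneg _), mul_div_cancel₀ a hp.ne']
  have jensen := (Real.concaveOn_rpow (div_nonneg ha hp.le) (div_le_one_of_le₀ hap hp.le)
    ).le_map_integral (f := fun ω ↦ |X ω| ^ p)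
    (Real.continuous_rpow_const (div_nonneg ha hp.le)).continuousOn isClosed_Ici
    (ae_of_all P fun ω ↦ Set.mem_Ici.2 (by positivity)) (integrable_abs_rpow hp hX)
  simp only [Function.comp_def, power] at jensen
  refine jensen ?_
  rcases ha.eq_or_lt with rfl | ha
  · simp
  · exact integrable_abs_rpow ha (hX.mono_exponent (ENNReal.ofReal_le_ofReal hap))

theorem integral_signedRPow_mul_eq_zero (hp : 1 < p) (hS : MemLp S (.ofReal p) P)
    (hX : MemLp X (.ofReal p) P) (h : S ⟂ᵢ[P] X) (hX₀ : ∫ ω, X ω ∂P = 0) :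
    ∫ ω, signedRPow (p - 1) (S ω) * X ω ∂P = 0 := by
  have continuous := continuous_signedRPow (sub_pos.2 hp)
  have indep : (fun ω ↦ signedRPow (p - 1) (S ω)) ⟂ᵢ[P] X :=
    h.comp continuous.measurable measurable_id
  rw [indep.integral_fun_mul_eq_mul_integral (continuous.comp_aestronglyMeasurable hS.1) hX.1, hX₀,
    mul_zero]

theorem integral_abs_rpow_le_integral_abs_add_rpow (hp : 1 < p) (hS : MemLp S (.ofReal p) P)
    (hX : MemLp X (.ofReal p) P) (h : S ⟂ᵢ[P] X) (hX₀ : ∫ ω, X ω ∂P = 0) :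
    ∫ ω, |S ω| ^ p ∂P ≤ ∫ ω, |S ω + X ω| ^ p ∂P := by
  have hp₀ : 0 < p := by linarith
  have int_p := integrable_abs_rpow hp₀ hS
  have int_σ := (integrable_signedRPow_mul hp hS hX).const_mul p
  calc ∫ ω, |S ω| ^ p ∂P
      = ∫ ω, (|S ω| ^ p + p * (signedRPow (p - 1) (S ω) * X ω)) ∂P := by
        rw [integral_add int_p int_σ, integral_const_mul,
          integral_signedRPow_mul_eq_zero hp hS hX h hX₀, mul_zero, add_zero]
    _ ≤ ∫ ω, |S ω + X ω| ^ p ∂P :=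
        integral_mono (int_p.add int_σ) (integrable_abs_rpow hp₀ (hS.add hX)) fun ω ↦
          (mul_assoc p _ (X ω)).symm ▸ abs_rpow_add_mul_signedRPow_le hp (S ω) (X ω)

theorem integral_abs_add_rpow_le (hp : 1 < p) (hS : MemLp S (.ofReal p) P)
    (hX : MemLp X (.ofReal p) P) (h : S ⟂ᵢ[P] X) (hX₀ : ∫ ω, X ω ∂P = 0) {G : Ω → ℝ}
    (hG : Integrable G P)
    (hGX : ∀ ω, |signedRPow (p - 1) (S ω + X ω) - signedRPow (p - 1) (S ω)| * |X ω| ≤ G ω) :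
    ∫ ω, |S ω + X ω| ^ p ∂P ≤ ∫ ω, |S ω| ^ p ∂P + p * ∫ ω, G ω ∂P := by
  have hp₀ : 0 < p := by linarith
  have int_p := integrable_abs_rpow hp₀ hS
  have int_σ := (integrable_signedRPow_mul hp hS hX).const_mul p
  have pointwise (ω : Ω) : |S ω + X ω| ^ p ≤
      |S ω| ^ p + p * G ω + p * (signedRPow (p - 1) (S ω) * X ω) := by
    have tangent := abs_rpow_add_mul_signedRPow_le hp (S ω + X ω) (-X ω)
    rw [add_neg_cancel_right] at tangent
    have := (le_abs_self _).trans (((abs_mul _ _).trans_le (hGX ω)))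
    nlinarith
  have int_pG : Integrable (fun ω ↦ |S ω| ^ p + p * G ω) P := int_p.add (hG.const_mul p)
  calc _ ≤ ∫ ω, |S ω| ^ p + p * G ω + p * (signedRPow (p - 1) (S ω) * X ω) ∂P :=
        integral_mono (integrable_abs_rpow hp₀ (hS.add hX)) (int_pG.add int_σ) pointwise
    _ = _ := by
        rw [integral_add int_pG int_σ, integral_add int_p (hG.const_mul p),
          integral_const_mul, integral_const_mul,
          integral_signedRPow_mul_eq_zero hp hS hX h hX₀, mul_zero, add_zero]

variable {ι : Type*} {Y : ι → Ω → ℝ}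

theorem integral_abs_sum_rpow_le_of_le_two [IsProbabilityMeasure P] (hp : 1 < p) (hp₂ : p ≤ 2)
    (hY : iIndepFun Y P) (hYp : ∀ i, MemLp (Y i) (.ofReal p) P) (hY₀ : ∀ i, ∫ ω, Y i ω ∂P = 0)
    (s : Finset ι) :
    ∫ ω, |∑ i ∈ s, Y i ω| ^ p ∂P ≤ 2 * p * ∑ i ∈ s, ∫ ω, |Y i ω| ^ p ∂P := by
  classical
  have hp₀ : 0 < p := by linarith
  induction s using Finset.induction_on with
  | empty => simp [Real.zero_rpow hp₀.ne']
  | insert i s hi ih =>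
    have indep := hY.indepFun_finsetSum_of_notMem₀ (fun j ↦ (hYp j).1.aemeasurable) hi
    have increment (ω : Ω) :
        |signedRPow (p - 1) ((∑ j ∈ s, Y j) ω + Y i ω) - signedRPow (p - 1) ((∑ j ∈ s, Y j) ω)|
          * |Y i ω| ≤ 2 * |Y i ω| ^ p := by
      calc _ ≤ 2 * |Y i ω| ^ (p - 1) * |Y i ω| := by
            gcongr
            simpa using abs_signedRPow_sub_le_of_le_one (sub_pos.2 hp) (by linarith)
              ((∑ j ∈ s, Y j) ω + Y i ω) ((∑ j ∈ s, Y j) ω)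
        _ = 2 * |Y i ω| ^ p := by
            rw [mul_assoc, ← Real.rpow_add_one' (abs_nonneg _) (by linarith), sub_add_cancel]
    have step := integral_abs_add_rpow_le hp (memLp_finsetSum' s fun j _ ↦ hYp j) (hYp i) indep
      (hY₀ i) ((integrable_abs_rpow hp₀ (hYp i)).const_mul 2) increment
    simp only [Finset.sum_apply, integral_const_mul] at step
    simp only [Finset.sum_insert hi, add_comm (Y i _)]
    linarith

theorem abs_signedRPow_add_sub_mul_abs_le (hp : 2 ≤ p) (s x : ℝ) :
    |signedRPow (p - 1) (s + x) - signedRPow (p - 1) s| * |x| ≤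
      (p - 1) * (2 ^ (p - 2) + 1) * (|x| ^ p + |s| ^ (p - 2) * |x| ^ (2 : ℝ)) := by
  have doubling : |s + x| ^ (p - 2) ≤ 2 ^ (p - 2) * (|s| ^ (p - 2) + |x| ^ (p - 2)) := by
    have h_max : |s + x| ≤ 2 * max |s| |x| :=
      (abs_add_le s x).trans (by linarith [le_max_left |s| |x|, le_max_right |s| |x|])
    calc |s + x| ^ (p - 2) ≤ (2 * max |s| |x|) ^ (p - 2) := by gcongr
      _ = 2 ^ (p - 2) * max |s| |x| ^ (p - 2) := Real.mul_rpow zero_le_two (by positivity)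
      _ ≤ _ := by
        gcongr
        rcases max_choice |s| |x| with h | h <;> rw [h]
        · exact le_add_of_nonneg_right (by positivity)
        · exact le_add_of_nonneg_left (by positivity)
  have lipschitz := abs_signedRPow_sub_le_of_one_le (show 1 ≤ p - 1 by linarith) (s + x) s
  rw [add_sub_cancel_left, show p - 1 - 1 = p - 2 by ring] at lipschitz
  have power : |x| ^ (p - 2) * |x| ^ (2 : ℝ) = |x| ^ p := by
    rw [← Real.rpow_add' (abs_nonneg _) (by linarith), sub_add_cancel]
  have hp₁ : 0 ≤ p - 1 := by linarith
  calc |signedRPow (p - 1) (s + x) - signedRPow (p - 1) s| * |x|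
      ≤ (p - 1) * (2 ^ (p - 2) * (|s| ^ (p - 2) + |x| ^ (p - 2)) +
          1 * (|s| ^ (p - 2) + |x| ^ (p - 2))) * |x| * |x| := by
        gcongr
        refine lipschitz.trans ?_
        gcongr
        rw [one_mul]
        exact le_add_of_nonneg_right (by positivity)
    _ = _ := by
        rw [← power, Real.rpow_two]
        ring

/-- Taylor's formula for `|·| ^ p` gives `E|S + X| ^ p ≤ E|S| ^ p + rosenthalConst p * R`, where the
remainder `R` involves only `E|X| ^ p`, `E X ^ 2` and `E|S| ^ p`. -/
def rosenthalConst (p : ℝ) : ℝ := p * ((p - 1) * (2 ^ (p - 2) + 1))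

theorem rosenthalConst_pos (hp : 1 < p) : 0 < rosenthalConst p := by
  have := sub_pos.2 hp
  unfold rosenthalConst
  positivity

theorem integral_abs_add_rpow_le_of_two_le [IsProbabilityMeasure P] (hp : 2 ≤ p)
    (hS : MemLp S (.ofReal p) P) (hX : MemLp X (.ofReal p) P) (h : S ⟂ᵢ[P] X)
    (hX₀ : ∫ ω, X ω ∂P = 0) :
    ∫ ω, |S ω + X ω| ^ p ∂P ≤ ∫ ω, |S ω| ^ p ∂P + rosenthalConst p *
      (∫ ω, |X ω| ^ p ∂P + (∫ ω, |S ω| ^ p ∂P) ^ ((p - 2) / p) * ∫ ω, X ω ^ 2 ∂P) := by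
  have hp₀ : 0 < p := by linarith
  have hp₂ : 0 ≤ p - 2 := by linarith
  have int_X := integrable_abs_rpow hp₀ hX
  have int_SX : Integrable (fun ω ↦ |S ω| ^ (p - 2) * |X ω| ^ (2 : ℝ)) P :=
    integrable_abs_rpow_mul_abs_rpow hp₂ zero_le_two (by linarith) (by simpa using hS)
      (by simpa using hX)
  have indep : (fun ω ↦ |S ω| ^ (p - 2)) ⟂ᵢ[P] fun ω ↦ |X ω| ^ (2 : ℝ) :=
    h.comp (φ := fun t ↦ |t| ^ (p - 2)) (ψ := fun t ↦ |t| ^ (2 : ℝ)) (by fun_prop) (by fun_prop)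
  have factor : ∫ ω, |S ω| ^ (p - 2) * |X ω| ^ (2 : ℝ) ∂P =
      (∫ ω, |S ω| ^ (p - 2) ∂P) * ∫ ω, X ω ^ 2 ∂P := by
    rw [indep.integral_fun_mul_eq_mul_integral
      (hS.1.aemeasurable.abs.pow_const _).aestronglyMeasurable
      (hX.1.aemeasurable.abs.pow_const _).aestronglyMeasurable]
    simp only [Real.rpow_two, sq_abs]
  have lyapunov := integral_abs_rpow_le_rpow_integral hp₂ (by linarith : p - 2 ≤ p) hp₀ hS
  calc _ ≤ _ := integral_abs_add_rpow_le (by linarith) hS hX h hX₀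
        ((int_X.add int_SX).const_mul _) fun ω ↦ abs_signedRPow_add_sub_mul_abs_le hp (S ω) (X ω)
    _ = ∫ ω, |S ω| ^ p ∂P + rosenthalConst p *
        (∫ ω, |X ω| ^ p ∂P + (∫ ω, |S ω| ^ (p - 2) ∂P) * ∫ ω, X ω ^ 2 ∂P) := by
      rw [integral_const_mul, integral_add' int_X int_SX, factor, ← mul_assoc, rosenthalConst]
    _ ≤ _ := by
      have := rosenthalConst_pos (show 1 < p by linarith)
      gcongr

theorem integral_abs_sum_rpow_le_self_bound [IsProbabilityMeasure P] (hp : 2 ≤ p)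
    (hY : iIndepFun Y P) (hYp : ∀ i, MemLp (Y i) (.ofReal p) P) (hY₀ : ∀ i, ∫ ω, Y i ω ∂P = 0)
    (s : Finset ι) :
    ∫ ω, |∑ i ∈ s, Y i ω| ^ p ∂P ≤ rosenthalConst p * (∑ i ∈ s, ∫ ω, |Y i ω| ^ p ∂P +
      (∫ ω, |∑ i ∈ s, Y i ω| ^ p ∂P) ^ ((p - 2) / p) * ∑ i ∈ s, ∫ ω, Y i ω ^ 2 ∂P) := by
  classical
  have hp₀ : 0 < p := by linarith
  have hp₁ : 1 < p := by linarith
  have hK := rosenthalConst_pos hp₁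
  induction s using Finset.induction_on with
  | empty => simp [Real.zero_rpow hp₀.ne']
  | insert i s hi ih =>
    have indep := hY.indepFun_finsetSum_of_notMem₀ (fun j ↦ (hYp j).1.aemeasurable) hi
    have hS := memLp_finsetSum' s fun j _ ↦ hYp j
    have step := integral_abs_add_rpow_le_of_two_le hp hS (hYp i) indep (hY₀ i)
    have mono := integral_abs_rpow_le_integral_abs_add_rpow hp₁ hS (hYp i) indep (hY₀ i)
    simp only [Finset.sum_apply] at step mono
    simp only [Finset.sum_insert hi, add_comm (Y i _)]
    set U := ∫ ω, |∑ j ∈ s, Y j ω| ^ p ∂P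
    set V := ∫ ω, |∑ j ∈ s, Y j ω + Y i ω| ^ p ∂P
    set A := ∑ j ∈ s, ∫ ω, |Y j ω| ^ p ∂P
    set B := ∑ j ∈ s, ∫ ω, Y j ω ^ 2 ∂P
    set a := ∫ ω, |Y i ω| ^ p ∂P
    set b := ∫ ω, Y i ω ^ 2 ∂P
    have hU : 0 ≤ U := integral_nonneg fun ω ↦ by positivity
    have : 0 ≤ B := Finset.sum_nonneg fun j _ ↦ integral_nonneg fun ω ↦ sq_nonneg _
    have : 0 ≤ b := integral_nonneg fun ω ↦ sq_nonneg _
    have power : U ^ ((p - 2) / p) ≤ V ^ ((p - 2) / p) :=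
      Real.rpow_le_rpow hU mono (div_nonneg (by linarith) hp₀.le)
    calc V ≤ U + rosenthalConst p * (a + U ^ ((p - 2) / p) * b) := step
      _ ≤ rosenthalConst p * (A + U ^ ((p - 2) / p) * B) +
          rosenthalConst p * (a + U ^ ((p - 2) / p) * b) := by gcongr
      _ ≤ rosenthalConst p * (A + V ^ ((p - 2) / p) * B) +
          rosenthalConst p * (a + V ^ ((p - 2) / p) * b) := by gcongr
      _ = rosenthalConst p * (a + A + V ^ ((p - 2) / p) * (b + B)) := by ring

theorem le_add_rpow_of_le_add_rpow_mul {a b u : ℝ} (hp : 2 ≤ p) (ha : 0 ≤ a) (hb : 0 ≤ b)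
    (hu : 0 ≤ u) (h : u ≤ a + u ^ ((p - 2) / p) * b) : u ≤ 2 * a + (2 * b) ^ (p / 2) := by
  have hp₀ : 0 < p := by linarith
  rcases le_total (u ^ ((p - 2) / p) * b) (u / 2) with h' | h'
  · have : 0 ≤ (2 * b) ^ (p / 2) := by positivity
    linarith
  rcases hu.eq_or_lt with rfl | hu
  · positivity
  have absorb : u ^ (2 / p) ≤ 2 * b := by
    have split : u ^ ((p - 2) / p) * u ^ (2 / p) = u := by
      rw [← Real.rpow_add hu, ← add_div, sub_add_cancel, div_self hp₀.ne', Real.rpow_one]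
    have : 0 < u ^ ((p - 2) / p) := by positivity
    nlinarith
  calc u = (u ^ (2 / p)) ^ (p / 2) := by
        rw [← Real.rpow_mul hu.le, div_mul_div_cancel₀ hp₀.ne', div_self two_ne_zero, Real.rpow_one]
    _ ≤ (2 * b) ^ (p / 2) := by gcongr
    _ ≤ 2 * a + (2 * b) ^ (p / 2) := le_add_of_nonneg_left (by positivity)

theorem integral_abs_sum_rpow_le_of_two_le [IsProbabilityMeasure P] (hp : 2 ≤ p)
    (hY : iIndepFun Y P) (hYp : ∀ i, MemLp (Y i) (.ofReal p) P) (hY₀ : ∀ i, ∫ ω, Y i ω ∂P = 0)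
    (s : Finset ι) :
    ∫ ω, |∑ i ∈ s, Y i ω| ^ p ∂P ≤ 2 * rosenthalConst p * ∑ i ∈ s, ∫ ω, |Y i ω| ^ p ∂P +
      (2 * rosenthalConst p * ∑ i ∈ s, ∫ ω, Y i ω ^ 2 ∂P) ^ (p / 2) := by
  have hK := rosenthalConst_pos (show 1 < p by linarith)
  have self_bound := integral_abs_sum_rpow_le_self_bound hp hY hYp hY₀ s
  rw [mul_add, mul_left_comm] at self_bound
  rw [mul_assoc, mul_assoc]
  refine le_add_rpow_of_le_add_rpow_mul hp ?_ ?_ ?_ self_bound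
  · exact mul_nonneg hK.le (Finset.sum_nonneg fun i _ ↦ integral_nonneg fun ω ↦ by positivity)
  · exact mul_nonneg hK.le (Finset.sum_nonneg fun i _ ↦ integral_nonneg fun ω ↦ by positivity)
  · exact integral_nonneg fun ω ↦ by positivity

end Moments

/-! ### Rosenthal's factorization of finite blocks -/

section RosenthalSystem

open MeasureTheory ProbabilityTheory

theorem conjExponent_le_two (hp : 2 ≤ p) : p.conjExponent ≤ 2 := by
  rw [Real.conjExponent, div_le_iff₀ (by linarith)]
  linarith

theorem le_rpow_mul_of_le_rpow_mul_rpow {q A C D : ℝ} (hpq : p.HolderConjugate q) (hC : 0 ≤ C)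
    (hA : 0 ≤ A) (hD : 0 ≤ D) (h : D ≤ A ^ (1 / p) * (C * D) ^ (1 / q)) :
    D ≤ C ^ (p - 1) * A := by
  rcases hD.eq_or_lt with rfl | hD
  · positivity
  have hp := hpq.pos
  have cancel : D ^ (1 / p) ≤ A ^ (1 / p) * C ^ (1 / q) := by
    refine le_of_mul_le_mul_right ?_ (by positivity : 0 < D ^ (1 / q))
    rw [← Real.rpow_add hD, one_div, one_div, hpq.inv_add_inv_eq_one, Real.rpow_one, mul_assoc,
      ← Real.mul_rpow hC hD.le, ← one_div, ← one_div]
    exact h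
  have exponent : 1 / q * p = p - 1 := by
    rw [hpq.conjugate_eq]
    have := hpq.sub_one_ne_zero
    field_simp
  calc D = (D ^ (1 / p)) ^ p := by
        rw [← Real.rpow_mul hD.le, one_div_mul_cancel hp.ne', Real.rpow_one]
    _ ≤ (A ^ (1 / p) * C ^ (1 / q)) ^ p := by gcongr
    _ = C ^ (p - 1) * A := by
      rw [Real.mul_rpow (by positivity) (by positivity), ← Real.rpow_mul hA, ← Real.rpow_mul hC,
        one_div_mul_cancel hp.ne', Real.rpow_one, exponent, mul_comm]

variable {Ω ι : Type*} [MeasurableSpace Ω] {P : Measure Ω} {v : ι → ℝ} {X : ι → Ω → ℝ}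

/-- Independent centered random variables whose linear combinations realize in `L_p` the norm
`max {|x|_p, |x|_{2,v}}`. The bound on the conjugate moments makes the orthogonal projection onto
their span bounded in `L_p`. -/
structure IsRosenthalSystem (p : ℝ) (v : ι → ℝ) (P : Measure Ω) (X : ι → Ω → ℝ) : Prop where
  iIndepFun : iIndepFun X P
  memLp : ∀ i, MemLp (X i) (.ofReal p) P
  integral_eq_zero : ∀ i, ∫ ω, X i ω ∂P = 0
  integral_sq : ∀ i, ∫ ω, X i ω ^ 2 ∂P = v i ^ 2
  integral_abs_rpow_le : ∀ i, ∫ ω, |X i ω| ^ p ∂P ≤ 1 + v i ^ p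
  integral_abs_rpow_conjExponent_le :
    ∀ i, ∫ ω, |X i ω| ^ p.conjExponent ∂P ≤ v i ^ (2 * p.conjExponent)

/-- The coefficients of the orthogonal projection of `F` onto the span of the system `X`. -/
def rosenthalCoeff (P : Measure Ω) (v : ι → ℝ) (X : ι → Ω → ℝ) (F : Ω → ℝ) (i : ι) : ℝ :=
  (∫ ω, F ω * X i ω ∂P) / v i ^ 2

namespace IsRosenthalSystem

theorem memLp_two [IsProbabilityMeasure P] (hX : IsRosenthalSystem p v P X) (hp : 2 ≤ p) (i : ι) :
    MemLp (X i) 2 P :=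
  (hX.memLp i).mono_exponent (by simpa using ENNReal.ofReal_le_ofReal hp)

theorem integral_mul_of_ne (hX : IsRosenthalSystem p v P X) {i j : ι} (hij : i ≠ j) :
    ∫ ω, X i ω * X j ω ∂P = 0 := by
  rw [(hX.iIndepFun.indepFun hij).integral_fun_mul_eq_mul_integral (hX.memLp i).1 (hX.memLp j).1,
    hX.integral_eq_zero, zero_mul]

variable [Fintype ι]

theorem memLp_sum (hX : IsRosenthalSystem p v P X) (c : ι → ℝ) :
    MemLp (fun ω ↦ ∑ i, c i * X i ω) (.ofReal p) P :=
  memLp_finsetSum _ fun i _ ↦ (hX.memLp i).const_mul (c i)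

variable [IsProbabilityMeasure P] {F : Ω → ℝ}

theorem integral_mul_sum (hX : IsRosenthalSystem p v P X) (hp : 2 ≤ p) (hF : MemLp F 2 P)
    (c : ι → ℝ) : ∫ ω, F ω * ∑ i, c i * X i ω ∂P = ∑ i, c i * ∫ ω, F ω * X i ω ∂P := by
  simp only [Finset.mul_sum, mul_left_comm (F _)]
  have integrable (i : ι) : Integrable (fun ω ↦ F ω * X i ω) P :=
    hF.integrable_mul (hX.memLp_two hp i)
  rw [integral_finsetSum _ fun i _ ↦ (integrable i).const_mul (c i)]
  simp only [integral_const_mul]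

theorem memLp_two_sum (hX : IsRosenthalSystem p v P X) (hp : 2 ≤ p) (c : ι → ℝ) :
    MemLp (fun ω ↦ ∑ i, c i * X i ω) 2 P :=
  memLp_finsetSum _ fun i _ ↦ (hX.memLp_two hp i).const_mul (c i)

theorem rosenthalCoeff_sum (hX : IsRosenthalSystem p v P X) (hp : 2 ≤ p) (hv : ∀ i, 0 < v i)
    (x : ι → ℝ) : rosenthalCoeff P v X (fun ω ↦ ∑ i, x i * X i ω) = x := by
  classical
  ext j
  have gram (i : ι) : ∫ ω, X j ω * X i ω ∂P = if i = j then v j ^ 2 else 0 := by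
    split_ifs with h
    · simp only [h, ← sq, hX.integral_sq]
    · exact hX.integral_mul_of_ne (Ne.symm h)
  have := (hv j).ne'
  simp only [rosenthalCoeff, mul_comm _ (X j _), hX.integral_mul_sum hp (hX.memLp_two hp j), gram,
    mul_ite, mul_zero, Finset.sum_ite_eq', Finset.mem_univ, if_true]
  field_simp

theorem integral_mul_sum_eq_sum_mul_coeff (hX : IsRosenthalSystem p v P X) (hp : 2 ≤ p)
    (hv : ∀ i, 0 < v i) (hF : MemLp F 2 P) (c : ι → ℝ) :
    ∫ ω, F ω * ∑ i, c i * X i ω ∂P = ∑ i, c i * v i ^ 2 * rosenthalCoeff P v X F i := by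
  rw [hX.integral_mul_sum hp hF]
  refine Finset.sum_congr rfl fun i _ ↦ ?_
  have := (hv i).ne'
  rw [rosenthalCoeff]
  field_simp

theorem sum_sq_rosenthalCoeff_le (hX : IsRosenthalSystem p v P X) (hp : 2 ≤ p)
    (hv : ∀ i, 0 < v i) (hF : MemLp F 2 P) :
    ∑ i, (v i * rosenthalCoeff P v X F i) ^ 2 ≤ ∫ ω, F ω ^ 2 ∂P := by
  set c := rosenthalCoeff P v X F
  set G : Ω → ℝ := fun ω ↦ ∑ i, c i * X i ω
  have hG : MemLp G 2 P := hX.memLp_two_sum hp c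
  have hFG : ∫ ω, F ω * G ω ∂P = ∑ i, (v i * c i) ^ 2 := by
    rw [hX.integral_mul_sum_eq_sum_mul_coeff hp hv hF]
    exact Finset.sum_congr rfl fun i _ ↦ by ring
  have hGG : ∫ ω, G ω * G ω ∂P = ∑ i, (v i * c i) ^ 2 := by
    rw [hX.integral_mul_sum_eq_sum_mul_coeff hp hv hG, hX.rosenthalCoeff_sum hp hv]
    exact Finset.sum_congr rfl fun i _ ↦ by ring
  have int_FF : Integrable (fun ω ↦ F ω ^ 2) P := hF.integrable_sq
  have int_FG : Integrable (fun ω ↦ F ω * G ω) P := hF.integrable_mul hG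
  have int_GG : Integrable (fun ω ↦ G ω * G ω) P := hG.integrable_mul hG
  have pointwise (ω : Ω) : 2 * (F ω * G ω) - G ω * G ω ≤ F ω ^ 2 := by
    nlinarith [sq_nonneg (F ω - G ω)]
  have := integral_mono ((int_FG.const_mul 2).sub int_GG) int_FF pointwise
  simp only [Pi.sub_apply] at this
  rw [integral_sub (int_FG.const_mul 2) int_GG, integral_const_mul, hFG, hGG] at this
  linarith

theorem integral_abs_sum_rpow_le (hX : IsRosenthalSystem p v P X) (hp : 2 ≤ p)
    (hv : ∀ i, 0 < v i) (x : ι → ℝ) :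
    ∫ ω, |∑ i, x i * X i ω| ^ p ∂P ≤ (2 * rosenthalConst p + (2 * rosenthalConst p) ^ (p / 2)) *
      (∑ i, |x i| ^ p + (∑ i, (v i * x i) ^ 2) ^ (p / 2)) := by
  have hK := rosenthalConst_pos (show 1 < p by linarith)
  set K := 2 * rosenthalConst p
  set A := ∑ i, |x i| ^ p
  set B := ∑ i, (v i * x i) ^ 2
  have rosenthal := integral_abs_sum_rpow_le_of_two_le hp
    (hX.iIndepFun.comp (fun i t ↦ x i * t) fun i ↦ by fun_prop)
    (fun i ↦ (hX.memLp i).const_mul (x i))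
    (fun i ↦ by simp [integral_const_mul, hX.integral_eq_zero]) Finset.univ
  simp only [Function.comp_apply, mul_pow, integral_const_mul, hX.integral_sq] at rosenthal
  have moments : ∑ i, ∫ ω, |x i * X i ω| ^ p ∂P ≤ A + B ^ (p / 2) := by
    calc ∑ i, ∫ ω, |x i * X i ω| ^ p ∂P ≤ ∑ i, (|x i| ^ p + ((v i * x i) ^ 2) ^ (p / 2)) := by
          refine Finset.sum_le_sum fun i _ ↦ ?_
          have : |v i * x i| ^ p = ((v i * x i) ^ 2) ^ (p / 2) := by
            rw [← sq_abs, ← Real.rpow_two, ← Real.rpow_mul (abs_nonneg _),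
              mul_div_cancel₀ p two_ne_zero]
          rw [← this, abs_mul, abs_of_pos (hv i), Real.mul_rpow (hv i).le (abs_nonneg _)]
          simp only [abs_mul, Real.mul_rpow (abs_nonneg _) (abs_nonneg _), integral_const_mul]
          nlinarith [hX.integral_abs_rpow_le i, show 0 ≤ |x i| ^ p by positivity]
      _ ≤ A + B ^ (p / 2) := by
          rw [Finset.sum_add_distrib]
          gcongr
          exact sum_rpow_le_rpow_sum (by linarith) _ fun i ↦ sq_nonneg _
  have variance : ∑ i, x i ^ 2 * v i ^ 2 = B := Finset.sum_congr rfl fun i _ ↦ by ring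
  rw [variance] at rosenthal
  calc _ ≤ K * ∑ i, ∫ ω, |x i * X i ω| ^ p ∂P + (K * B) ^ (p / 2) := rosenthal
    _ ≤ K * (A + B ^ (p / 2)) + K ^ (p / 2) * (A + B ^ (p / 2)) := by
        rw [Real.mul_rpow (by positivity) (by positivity)]
        gcongr
        exact le_add_of_nonneg_left (by positivity)
    _ = _ := by ring

theorem integral_abs_sum_div_rpow_conjExponent_le (hX : IsRosenthalSystem p v P X) (hp : 2 ≤ p)
    (hv : ∀ i, 0 < v i) (c : ι → ℝ) :
    ∫ ω, |∑ i, c i / v i ^ 2 * X i ω| ^ p.conjExponent ∂P ≤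
      2 * p.conjExponent * ∑ i, |c i| ^ p.conjExponent := by
  have hpq : p.HolderConjugate p.conjExponent := .conjExponent (by linarith)
  have hq₂ := conjExponent_le_two hp
  have vonBahrEsseen := integral_abs_sum_rpow_le_of_le_two hpq.symm.lt hq₂
    (hX.iIndepFun.comp (fun i t ↦ c i / v i ^ 2 * t) fun i ↦ by fun_prop)
    (fun i ↦ ((hX.memLp i).mono_exponent (ENNReal.ofReal_le_ofReal (hq₂.trans hp))).const_mul _)
    (fun i ↦ by simp [integral_const_mul, hX.integral_eq_zero]) Finset.univ
  simp only [Function.comp_apply] at vonBahrEsseen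
  refine vonBahrEsseen.trans ?_
  have := hpq.symm.pos
  gcongr with i
  have := hv i
  have scaling : |c i / v i ^ 2| ^ p.conjExponent * v i ^ (2 * p.conjExponent) =
      |c i| ^ p.conjExponent := by
    rw [Real.rpow_mul (hv i).le, Real.rpow_two, ← Real.mul_rpow (abs_nonneg _) (by positivity),
      abs_div, abs_of_pos (by positivity : 0 < v i ^ 2), div_mul_cancel₀ _ (by positivity)]
  simp only [abs_mul, Real.mul_rpow (abs_nonneg _) (abs_nonneg _), integral_const_mul]
  rw [← scaling]
  gcongr
  exact hX.integral_abs_rpow_conjExponent_le i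

theorem sum_abs_rosenthalCoeff_rpow_le (hX : IsRosenthalSystem p v P X) (hp : 2 ≤ p)
    (hv : ∀ i, 0 < v i) (hF : MemLp F (.ofReal p) P) :
    ∑ i, |rosenthalCoeff P v X F i| ^ p ≤
      (2 * p.conjExponent) ^ (p - 1) * ∫ ω, |F ω| ^ p ∂P := by
  set q := p.conjExponent
  set c := rosenthalCoeff P v X F
  set D := ∑ i, |c i| ^ p
  have hpq : p.HolderConjugate q := .conjExponent (by linarith)
  have hp₁ : 0 < p - 1 := by linarith
  set d : ι → ℝ := fun i ↦ signedRPow (p - 1) (c i)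
  set G : Ω → ℝ := fun ω ↦ ∑ i, d i / v i ^ 2 * X i ω
  have norming : ∫ ω, F ω * G ω ∂P = D := by
    have hF₂ : MemLp F 2 P := hF.mono_exponent (by simpa using ENNReal.ofReal_le_ofReal hp)
    rw [hX.integral_mul_sum_eq_sum_mul_coeff hp hv hF₂]
    refine Finset.sum_congr rfl fun i _ ↦ ?_
    rw [div_mul_cancel₀ _ (by have := hv i; positivity), signedRPow_mul_self hp₁, sub_add_cancel]
  have conjugate_norm : ∫ ω, |G ω| ^ q ∂P ≤ 2 * q * D := by
    convert hX.integral_abs_sum_div_rpow_conjExponent_le hp hv d using 3 with i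
    rw [abs_signedRPow hp₁, ← Real.rpow_mul (abs_nonneg _), hpq.sub_one_mul_conj]
  have hG : MemLp G (.ofReal q) P :=
    (hX.memLp_sum fun i ↦ d i / v i ^ 2).mono_exponent (ENNReal.ofReal_le_ofReal
      ((conjExponent_le_two hp).trans hp))
  have holder : D ≤ (∫ ω, |F ω| ^ p ∂P) ^ (1 / p) * (2 * q * D) ^ (1 / q) := by
    calc D = ∫ ω, F ω * G ω ∂P := norming.symm
      _ ≤ ∫ ω, |F ω| * |G ω| ∂P := by
        simp only [← abs_mul]
        exact (le_abs_self _).trans (abs_integral_le_integral_abs)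
      _ ≤ (∫ ω, |F ω| ^ p ∂P) ^ (1 / p) * (∫ ω, |G ω| ^ q ∂P) ^ (1 / q) :=
        integral_mul_norm_le_Lp_mul_Lq hpq hF hG
      _ ≤ _ := by
        have := hpq.symm.pos
        gcongr
  exact le_rpow_mul_of_le_rpow_mul_rpow hpq (by have := hpq.symm.pos; positivity)
    (integral_nonneg fun ω ↦ by positivity) (by positivity) holder

end IsRosenthalSystem

end RosenthalSystem

section RosenthalFactorization

open MeasureTheory ProbabilityTheory

/-- The law on `{0, 1, 2}` giving mass `m / 2` to each of the two end points: the law of a sign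
multiplied by an independent indicator of probability `m`, with `{-1, 0, 1}` shifted by `1`. -/
def symmetricThreePoint (m : ℝ) : Measure (Fin 3) :=
  (1 - m).toNNReal • Measure.dirac 1 +
    (m / 2).toNNReal • (Measure.dirac 0 + Measure.dirac 2)

theorem isProbabilityMeasure_symmetricThreePoint {m : ℝ} (hm₀ : 0 ≤ m) (hm₁ : m ≤ 1) :
    IsProbabilityMeasure (symmetricThreePoint m) := by
  have total : (1 - m).toNNReal + (m / 2).toNNReal * 2 = 1 := by
    ext
    push_cast [Real.coe_toNNReal _ (sub_nonneg.2 hm₁),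
      Real.coe_toNNReal _ (div_nonneg hm₀ zero_le_two)]
    ring
  constructor
  simp only [symmetricThreePoint, Measure.add_apply, Measure.smul_apply, measure_univ]
  simp only [ENNReal.smul_def, smul_eq_mul, mul_one, one_add_one_eq_two]
  exact_mod_cast total

theorem integral_symmetricThreePoint {m : ℝ} (hm₀ : 0 ≤ m) (hm₁ : m ≤ 1) (f : Fin 3 → ℝ) :
    ∫ t, f t ∂symmetricThreePoint m = (1 - m) * f 1 + m / 2 * (f 0 + f 2) := by
  rw [symmetricThreePoint, integral_add_measure .of_finite .of_finite,
    integral_smul_nnreal_measure, integral_smul_nnreal_measure,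
    integral_add_measure .of_finite .of_finite]
  simp [NNReal.smul_def, hm₁, div_nonneg hm₀, mul_add]

theorem exists_symmetric_moments (hp : 2 < p) {v : ℝ} (hv : 0 < v) :
    ∃ m h : ℝ, 0 ≤ m ∧ m ≤ 1 ∧ 0 ≤ h ∧ m * h ^ 2 = v ^ 2 ∧ m * h ^ p ≤ 1 + v ^ p ∧
      m * h ^ p.conjExponent ≤ v ^ (2 * p.conjExponent) := by
  have hp₂ : 0 < p - 2 := by linarith
  have hp₁ : 0 < p - 1 := by linarith
  rcases le_total 1 v with h1v | hv1
  · refine ⟨1, v, zero_le_one, le_rfl, hv.le, one_mul _, by simp, ?_⟩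
    have := (Real.HolderConjugate.conjExponent (by linarith : 1 < p)).symm.pos
    rw [one_mul]
    exact Real.rpow_le_rpow_of_exponent_le h1v (by linarith)
  · have moment (s : ℝ) : v ^ (2 * p / (p - 2)) * (v ^ (-2 / (p - 2))) ^ s =
        v ^ (2 * (p - s) / (p - 2)) := by
      rw [← Real.rpow_mul hv.le, ← Real.rpow_add hv]
      congr 1
      ring
    refine ⟨v ^ (2 * p / (p - 2)), v ^ (-2 / (p - 2)), by positivity,
      Real.rpow_le_one hv.le hv1 (by positivity), by positivity, ?_, ?_, ?_⟩
    · rw [← Real.rpow_two, moment, mul_div_assoc, div_self hp₂.ne', mul_one, Real.rpow_two]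
    · simpa [moment] using Real.rpow_nonneg hv.le p
    · rw [moment]
      refine le_of_eq ?_
      congr 1
      rw [Real.conjExponent]
      field_simp
      ring

theorem exists_isRosenthalSystem (hp : 2 < p) {ι : Type*} [Finite ι] {v : ι → ℝ}
    (hv : ∀ i, 0 < v i) :
    ∃ (P : Measure (ι → Fin 3)) (X : ι → (ι → Fin 3) → ℝ),
      IsProbabilityMeasure P ∧ IsRosenthalSystem p v P X := by
  cases nonempty_fintype ι
  choose m h hm₀ hm₁ hh h_sq h_p h_conj using fun i ↦ exists_symmetric_moments hp (hv i)
  have (i : ι) := isProbabilityMeasure_symmetricThreePoint (hm₀ i) (hm₁ i)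
  let value (i : ι) (t : Fin 3) : ℝ := h i * ((t : ℕ) - 1)
  have integral_value (i : ι) (g : ℝ → ℝ) :
      ∫ ω, g (value i (ω i)) ∂Measure.pi (fun i ↦ symmetricThreePoint (m i)) =
        (1 - m i) * g 0 + m i / 2 * (g (-h i) + g (h i)) := by
    rw [integral_comp_eval (μ := fun i ↦ symmetricThreePoint (m i)) (f := fun t ↦ g (value i t))
        .of_discrete, integral_symmetricThreePoint (hm₀ i) (hm₁ i)]
    norm_num [value]
  have moment (i : ι) {s : ℝ} (hs : 0 < s) :
      ∫ ω, |value i (ω i)| ^ s ∂Measure.pi (fun i ↦ symmetricThreePoint (m i)) =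
        m i * h i ^ s := by
    rw [integral_value i fun t ↦ |t| ^ s]
    simp only [abs_zero, Real.zero_rpow hs.ne', abs_neg, abs_of_nonneg (hh i)]
    ring
  refine ⟨Measure.pi fun i ↦ symmetricThreePoint (m i), fun i ω ↦ value i (ω i), inferInstance,
    ⟨iIndepFun_pi fun i ↦ (measurable_of_finite _).aemeasurable, fun i ↦ .of_discrete,
    fun i ↦ ?_, fun i ↦ ?_, fun i ↦ ?_, fun i ↦ ?_⟩⟩
  · rw [integral_value i fun t ↦ t]
    ring
  · rw [integral_value i fun t ↦ t ^ 2, ← h_sq]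
    ring
  · rw [moment i (by linarith)]
    exact h_p i
  · rw [moment i (Real.HolderConjugate.conjExponent (by linarith : 1 < p)).symm.pos]
    exact h_conj i

/-- Linear maps `a` and `b` factoring the identity of `ι → ℝ`, normed by
`max {|x|_p, |x|_{2,v}}`, through `ℓ_p(Ω)`. -/
structure IsLpFactorization {ι Ω : Type*} [Fintype ι] [Fintype Ω] (p C : ℝ) (v : ι → ℝ)
    (a : (ι → ℝ) →ₗ[ℝ] (Ω → ℝ)) (b : (Ω → ℝ) →ₗ[ℝ] (ι → ℝ)) : Prop where
  leftInverse : Function.LeftInverse b a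
  sum_abs_rpow_le :
    ∀ x, ∑ ω, |a x ω| ^ p ≤ C * (∑ i, |x i| ^ p + (∑ i, (v i * x i) ^ 2) ^ (p / 2))
  sum_abs_symm_rpow_le : ∀ f, ∑ i, |b f i| ^ p ≤ C * ∑ ω, |f ω| ^ p
  sum_sq_symm_le : ∀ f, ∑ i, (v i * b f i) ^ 2 ≤ (∑ ω, |f ω| ^ p) ^ (2 / p)

section Finite

variable {Ω ι : Type*} [MeasurableSpace Ω] {P : Measure Ω}

theorem abs_real_rpow_mul_rpow (hp : 0 < p) (F : Ω → ℝ) (ω : Ω) :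
    |P.real {ω} ^ (1 / p) * F ω| ^ p = P.real {ω} * |F ω| ^ p := by
  rw [abs_mul, Real.mul_rpow (abs_nonneg _) (abs_nonneg _), abs_of_nonneg (by positivity),
    ← Real.rpow_mul measureReal_nonneg, one_div_mul_cancel hp.ne', Real.rpow_one]

/-- The synthesis map `x ↦ ∑ i, x i * X i`, followed by the isometry `F ↦ P{ω} ^ (1/p) * F` of
`L_p(P)` into `ℓ_p(Ω)`. -/
def rosenthalSynthesis [Fintype ι] (p : ℝ) (P : Measure Ω) (X : ι → Ω → ℝ) :
    (ι → ℝ) →ₗ[ℝ] (Ω → ℝ) where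
  toFun x ω := P.real {ω} ^ (1 / p) * ∑ i, x i * X i ω
  map_add' x y := by
    ext ω
    simp only [Pi.add_apply, add_mul, Finset.sum_add_distrib, mul_add]
  map_smul' c x := by
    ext ω
    simp only [Pi.smul_apply, smul_eq_mul, RingHom.id_apply, mul_assoc, ← Finset.mul_sum]
    exact mul_left_comm _ _ _

variable [MeasurableSingletonClass Ω] [IsProbabilityMeasure P]

theorem integral_eq_sum_real_mul [Fintype Ω] (f : Ω → ℝ) : ∫ ω, f ω ∂P = ∑ ω, P.real {ω} * f ω := by
  simpa using integral_fintype (μ := P) (f := f) .of_finite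

theorem integral_abs_inv_real_rpow_mul_rpow_le [Fintype Ω] (hp : 0 < p) (f : Ω → ℝ) :
    ∫ ω, |(P.real {ω} ^ (1 / p))⁻¹ * f ω| ^ p ∂P ≤ ∑ ω, |f ω| ^ p := by
  rw [integral_eq_sum_real_mul]
  refine Finset.sum_le_sum fun ω _ ↦ ?_
  rw [← abs_real_rpow_mul_rpow hp fun ω ↦ (P.real {ω} ^ (1 / p))⁻¹ * f ω]
  refine Real.rpow_le_rpow (abs_nonneg _) ?_ hp.le
  rw [← mul_assoc, abs_mul]
  refine mul_le_of_le_one_left (abs_nonneg _) ?_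
  rw [abs_mul, abs_inv]
  exact mul_inv_le_one

/-- On a finite probability space, `f ↦ P{ω} ^ (-1/p) * f` maps `ℓ_p(Ω)` onto `L_p(P)`; here the
coefficients of the image in the system `X` are taken. Atoms of measure zero are sent to `0`
because `0⁻¹ = 0`. -/
def rosenthalAnalysis [Finite Ω] (p : ℝ) (P : Measure Ω) [IsProbabilityMeasure P] (v : ι → ℝ)
    (X : ι → Ω → ℝ) : (Ω → ℝ) →ₗ[ℝ] (ι → ℝ) where
  toFun f := rosenthalCoeff P v X fun ω ↦ (P.real {ω} ^ (1 / p))⁻¹ * f ω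
  map_add' f g := by
    ext i
    simp only [rosenthalCoeff, Pi.add_apply, mul_add, add_mul]
    rw [integral_add .of_finite .of_finite, add_div]
  map_smul' c f := by
    ext i
    simp only [rosenthalCoeff, Pi.smul_apply, smul_eq_mul, RingHom.id_apply, mul_left_comm _ c,
      mul_assoc, integral_const_mul, mul_div_assoc]

theorem rosenthalCoeff_inv_real_rpow_mul_cancel [Finite Ω] (hp : 0 < p) (v : ι → ℝ)
    (X : ι → Ω → ℝ) (F : Ω → ℝ) :
    rosenthalCoeff P v X (fun ω ↦ (P.real {ω} ^ (1 / p))⁻¹ * (P.real {ω} ^ (1 / p) * F ω)) =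
      rosenthalCoeff P v X F := by
  cases nonempty_fintype Ω
  ext i
  simp only [rosenthalCoeff, integral_eq_sum_real_mul]
  congr 1
  refine Finset.sum_congr rfl fun ω _ ↦ ?_
  rcases eq_or_ne (P.real {ω}) 0 with h | h
  · simp [h]
  · rw [inv_mul_cancel_left₀ ((Real.rpow_ne_zero measureReal_nonneg (by positivity)).2 h)]

theorem IsRosenthalSystem.isLpFactorization [Fintype Ω] [Fintype ι] {v : ι → ℝ} {X : ι → Ω → ℝ}
    (hX : IsRosenthalSystem p v P X) (hp : 2 ≤ p) (hv : ∀ i, 0 < v i) :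
    IsLpFactorization p
      (max (2 * rosenthalConst p + (2 * rosenthalConst p) ^ (p / 2))
        ((2 * p.conjExponent) ^ (p - 1))) v
      (rosenthalSynthesis p P X) (rosenthalAnalysis p P v X) := by
  have hp₀ : 0 < p := by linarith
  refine ⟨fun x ↦ ?_, fun x ↦ ?_, fun f ↦ ?_, fun f ↦ ?_⟩
  · exact (rosenthalCoeff_inv_real_rpow_mul_cancel hp₀ v X _).trans (hX.rosenthalCoeff_sum hp hv x)
  · calc ∑ ω, |rosenthalSynthesis p P X x ω| ^ p = ∫ ω, |∑ i, x i * X i ω| ^ p ∂P := by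
          rw [integral_eq_sum_real_mul]
          exact Finset.sum_congr rfl fun ω _ ↦
            abs_real_rpow_mul_rpow hp₀ (fun ω ↦ ∑ i, x i * X i ω) ω
      _ ≤ _ := hX.integral_abs_sum_rpow_le hp hv x
      _ ≤ _ := by gcongr; exact le_max_left _ _
  · have hq := (Real.HolderConjugate.conjExponent (by linarith : 1 < p)).symm.pos
    calc _ ≤ _ := hX.sum_abs_rosenthalCoeff_rpow_le hp hv .of_discrete
      _ ≤ _ := mul_le_mul (le_max_right _ _) (integral_abs_inv_real_rpow_mul_rpow_le hp₀ f)
        (integral_nonneg fun ω ↦ by positivity) (by positivity)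
  · refine (hX.sum_sq_rosenthalCoeff_le hp hv .of_discrete).trans ?_
    have lyapunov := integral_abs_rpow_le_rpow_integral (P := P) zero_le_two hp hp₀
      (.of_discrete : MemLp (fun ω ↦ (P.real {ω} ^ (1 / p))⁻¹ * f ω) _ P)
    simp only [Real.rpow_two, sq_abs] at lyapunov
    refine lyapunov.trans ?_
    gcongr
    exact integral_abs_inv_real_rpow_mul_rpow_le hp₀ f

end Finite

theorem exists_isLpFactorization (hp : 2 < p) : ∃ C, 0 < C ∧
    ∀ {ι : Type} [Fintype ι] {v : ι → ℝ}, (∀ i, 0 < v i) →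
      ∃ (Ω : Type) (_ : Fintype Ω) (_ : Nonempty Ω) (a : (ι → ℝ) →ₗ[ℝ] (Ω → ℝ))
        (b : (Ω → ℝ) →ₗ[ℝ] (ι → ℝ)), IsLpFactorization p C v a b := by
  classical
  have hK := rosenthalConst_pos (show 1 < p by linarith)
  refine ⟨max (2 * rosenthalConst p + (2 * rosenthalConst p) ^ (p / 2))
    ((2 * p.conjExponent) ^ (p - 1)), lt_max_of_lt_left (by positivity), fun hv ↦ ?_⟩
  obtain ⟨P, X, _, hX⟩ := exists_isRosenthalSystem hp hv
  exact ⟨_, inferInstance, inferInstance, _, _, hX.isLpFactorization hp.le hv⟩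

end RosenthalFactorization

/-! ### Subspaces on which the `ℓ_r` norm controls the `ℓ_q` norm -/

section GlidingHump

open Filter Topology

variable {α ι : Type*} {q r : ℝ≥0∞} [Fact (1 ≤ q)] [Fact (1 ≤ r)]

theorem abs_norm_rpow_sub_norm_rpow_le {E : Type*} [SeminormedAddCommGroup E] (hp : 1 ≤ p) {R : ℝ}
    {x y : E} (hx : ‖x‖ ≤ R) (hy : ‖y‖ ≤ R) :
    |‖x‖ ^ p - ‖y‖ ^ p| ≤ p * R ^ (p - 1) * ‖x - y‖ := by
  wlog h : ‖y‖ ≤ ‖x‖ generalizing x y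
  · rw [abs_sub_comm, norm_sub_rev]
    exact this hy hx (le_of_not_ge h)
  rw [abs_of_nonneg (sub_nonneg.2 (by gcongr))]
  refine (rpow_sub_rpow_le hp (norm_nonneg y) h).trans ?_
  gcongr
  · exact mul_nonneg (by linarith) (Real.rpow_nonneg ((norm_nonneg x).trans hx) _)
  · exact norm_sub_norm_le x y

theorem tendsto_norm_add_rpow_sub_norm_rpow_of_finite (hq : q ≠ ⊤) {l : Filter ι}
    {u : ι → lp (fun _ : α ↦ ℝ) q} (hu : ∀ a, Tendsto (fun i ↦ u i a) l (𝓝 0))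
    {s : Finset α} {x : lp (fun _ : α ↦ ℝ) q} (hx : ∀ a ∉ s, x a = 0) :
    Tendsto (fun i ↦ ‖x + u i‖ ^ q.toReal - ‖u i‖ ^ q.toReal) l (𝓝 (‖x‖ ^ q.toReal)) := by
  have hq₀ : 0 < q.toReal := ENNReal.toReal_pos (zero_lt_one.trans_le Fact.out).ne' hq
  have finite_sum (i : ι) : ‖x + u i‖ ^ q.toReal - ‖u i‖ ^ q.toReal =
      ∑ a ∈ s, (‖x a + u i a‖ ^ q.toReal - ‖u i a‖ ^ q.toReal) := by
    rw [lp.norm_rpow_eq_tsum hq₀, lp.norm_rpow_eq_tsum hq₀,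
      ← ((lp.memℓp _).summable hq₀).tsum_sub ((lp.memℓp _).summable hq₀)]
    exact tsum_eq_sum fun a ha ↦ by simp [hx a ha]
  have norm_x : ‖x‖ ^ q.toReal = ∑ a ∈ s, (‖x a + 0‖ ^ q.toReal - ‖(0 : ℝ)‖ ^ q.toReal) := by
    rw [lp.norm_rpow_eq_tsum hq₀, tsum_eq_sum (s := s) fun a ha ↦ by simp [hx a ha, hq₀.ne']]
    simp [hq₀.ne']
  simp only [finite_sum, norm_x]
  exact tendsto_finsetSum _ fun a _ ↦ (((hu a).const_add _).norm.rpow_const (.inr hq₀.le)).sub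
    ((hu a).norm.rpow_const (.inr hq₀.le))

/- A Brezis–Lieb lemma. For finitely supported `x` the difference is a finite sum; in general `x` is
approximated, the maps `x ↦ ‖x + u i‖ ^ q - ‖u i‖ ^ q` being equicontinuous. -/
theorem tendsto_norm_add_rpow_sub_norm_rpow (hq : q ≠ ⊤) {l : Filter ι}
    {u : ι → lp (fun _ : α ↦ ℝ) q} {M : ℝ} (hM : ∀ i, ‖u i‖ ≤ M)
    (hu : ∀ a, Tendsto (fun i ↦ u i a) l (𝓝 0)) (x : lp (fun _ : α ↦ ℝ) q) :
    Tendsto (fun i ↦ ‖x + u i‖ ^ q.toReal - ‖u i‖ ^ q.toReal) l (𝓝 (‖x‖ ^ q.toReal)) := by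
  classical
  have hq₁ : 1 ≤ q.toReal := by
    simpa using ENNReal.toReal_mono hq (Fact.out : 1 ≤ q)
  set C := q.toReal * (‖x‖ + 1 + M) ^ (q.toReal - 1)
  have modulus : ∀ᶠ y in 𝓝 x, ∀ i, dist (‖x + u i‖ ^ q.toReal - ‖u i‖ ^ q.toReal)
      (‖y + u i‖ ^ q.toReal - ‖u i‖ ^ q.toReal) ≤ C * ‖x - y‖ := by
    filter_upwards [Metric.ball_mem_nhds x one_pos] with y hy i
    have norm_y : ‖y‖ ≤ ‖x‖ + 1 := by
      linarith [norm_le_insert' y x, mem_ball_iff_norm.1 hy]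
    rw [Real.dist_eq, sub_sub_sub_cancel_right, ← add_sub_add_right_eq_sub x y (u i)]
    exact abs_norm_rpow_sub_norm_rpow_le hq₁
      ((norm_add_le _ _).trans (by linarith [hM i]))
      ((norm_add_le _ _).trans (by linarith [hM i]))
  have modulus_tendsto : Tendsto (fun y ↦ C * ‖x - y‖) (𝓝 x) (𝓝 0) := by
    have : Continuous fun y ↦ C * ‖x - y‖ := by fun_prop
    simpa using this.tendsto x
  refine (Metric.equicontinuousAt_of_continuity_modulus _ modulus_tendsto _
    modulus).tendsto_of_mem_closure (s := {y | ∃ s : Finset α, ∀ a ∉ s, y a = 0})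
    (f := fun y ↦ ‖y‖ ^ q.toReal)
    ((continuous_norm.rpow_const fun _ ↦ .inr (by linarith)).tendsto x |>.mono_left
      nhdsWithin_le_nhds) (fun y ⟨_, hy⟩ ↦ tendsto_norm_add_rpow_sub_norm_rpow_of_finite hq hu hy)
    (mem_closure_of_tendsto (lp.hasSum_single hq x) (.of_forall fun s ↦ ⟨s, fun a ha ↦ ?_⟩))
  rw [lp.coeFn_sum, Finset.sum_apply]
  exact Finset.sum_eq_zero fun b hb ↦ lp.single_apply_ne q b _ fun h ↦ ha (h ▸ hb)

/- If `‖u i‖_q` stayed above `δ`, one could add up successively elements of the family far out along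
`l`: the sum of `m` of them has `ℓ_r` norm `O(m ^ (1 / r))` but `ℓ_q` norm at least of the order
`m ^ (1 / q)`. -/
theorem exists_norm_rpow_le_and_le_norm_rpow (hr : r ≠ ⊤) (hq : q ≠ ⊤)
    {Y : Submodule ℝ (lp (fun _ : α ↦ ℝ) r × lp (fun _ : α ↦ ℝ) q)} {l : Filter ι} [l.NeBot]
    {u : ι → lp (fun _ : α ↦ ℝ) r × lp (fun _ : α ↦ ℝ) q} (huY : ∀ i, u i ∈ Y) {M N δ : ℝ}
    (hM : ∀ i, ‖(u i).1‖ ≤ M) (hN : ∀ i, ‖(u i).2‖ ≤ N) (hδ : 0 < δ)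
    (hu_δ : ∀ᶠ i in l, δ ≤ ‖(u i).2‖)
    (hu₁ : ∀ a, Tendsto (fun i ↦ (u i).1 a) l (𝓝 0))
    (hu₂ : ∀ a, Tendsto (fun i ↦ (u i).2 a) l (𝓝 0)) (m : ℕ) :
    ∃ y ∈ Y, ‖y.1‖ ^ r.toReal ≤ m * (M ^ r.toReal + 1) ∧
      m * (δ ^ q.toReal / 2) ≤ ‖y.2‖ ^ q.toReal := by
  have hr₀ : 0 < r.toReal := ENNReal.toReal_pos (zero_lt_one.trans_le Fact.out).ne' hr
  have hq₀ : 0 < q.toReal := ENNReal.toReal_pos (zero_lt_one.trans_le Fact.out).ne' hq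
  induction m with
  | zero => exact ⟨0, Y.zero_mem, by simp [hr₀.ne'], by simp [hq₀.ne']⟩
  | succ m ih =>
    obtain ⟨y, hyY, hy₁, hy₂⟩ := ih
    have upper := (tendsto_norm_add_rpow_sub_norm_rpow hr hM hu₁ y.1).eventually_lt_const
      (lt_add_one _)
    have lower := (tendsto_norm_add_rpow_sub_norm_rpow hq hN hu₂ y.2).eventually_const_lt
      (sub_lt_self _ (half_pos (Real.rpow_pos_of_pos hδ q.toReal)))
    obtain ⟨i, upper, lower, hδi⟩ := (upper.and (lower.and hu_δ)).exists
    have norm_u₁ : ‖(u i).1‖ ^ r.toReal ≤ M ^ r.toReal := by gcongr; exact hM i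
    have norm_u₂ : δ ^ q.toReal ≤ ‖(u i).2‖ ^ q.toReal := by gcongr
    refine ⟨y + u i, Y.add_mem hyY (huY i), ?_, ?_⟩
    · push_cast
      rw [Prod.fst_add]
      linarith
    · push_cast
      rw [Prod.snd_add]
      linarith

theorem exists_mul_rpow_lt_mul {c θ : ℝ} (hc : 0 < c) (hθ : θ < 1) (K : ℝ) :
    ∃ m : ℕ, K * (m : ℝ) ^ θ < m * c := by
  have growth := ((tendsto_rpow_atTop (sub_pos.2 hθ)).comp
    tendsto_natCast_atTop_atTop).eventually_gt_atTop (K / c)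
  obtain ⟨m, growth, hm⟩ := (growth.and (eventually_gt_atTop 0)).exists
  have hm : (0 : ℝ) < m := by exact_mod_cast hm
  refine ⟨m, ?_⟩
  calc K * (m : ℝ) ^ θ < (m : ℝ) ^ (1 - θ) * c * (m : ℝ) ^ θ := by
        gcongr
        exact (div_lt_iff₀ hc).1 growth
    _ = m * c := by rw [mul_right_comm, ← Real.rpow_add hm, sub_add_cancel, Real.rpow_one]

theorem tendsto_norm_snd_zero (hr : r ≠ ⊤) (hqr : q < r)
    {Y : Submodule ℝ (lp (fun _ : α ↦ ℝ) r × lp (fun _ : α ↦ ℝ) q)} {β : ℝ} (hβ : 0 ≤ β)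
    (hY : ∀ y ∈ Y, ‖y.2‖ ≤ β * ‖y.1‖) {l : Filter ι}
    {u : ι → lp (fun _ : α ↦ ℝ) r × lp (fun _ : α ↦ ℝ) q} (huY : ∀ i, u i ∈ Y) {M : ℝ}
    (hM : ∀ i, ‖(u i).1‖ ≤ M)
    (hu₁ : ∀ a, Tendsto (fun i ↦ (u i).1 a) l (𝓝 0))
    (hu₂ : ∀ a, Tendsto (fun i ↦ (u i).2 a) l (𝓝 0)) :
    Tendsto (fun i ↦ ‖(u i).2‖) l (𝓝 0) := by
  have hq : q ≠ ⊤ := hqr.ne_top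
  have hq₀ : 0 < q.toReal := ENNReal.toReal_pos (zero_lt_one.trans_le Fact.out).ne' hq
  have hqr' : q.toReal < r.toReal := ENNReal.toReal_strict_mono hr hqr
  refine tendsto_order.2 ⟨fun a ha ↦ .of_forall fun i ↦ ha.trans_le (norm_nonneg _), fun δ hδ ↦ ?_⟩
  by_contra not_small
  set large : Set ι := {i | δ ≤ ‖(u i).2‖}
  have frequently_large : ∃ᶠ i in l, i ∈ large :=
    (not_eventually.1 not_small).mono fun i hi ↦ not_lt.1 hi
  have : (l ⊓ 𝓟 large).NeBot := frequently_mem_iff_neBot.1 frequently_large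
  have hθ : q.toReal / r.toReal < 1 := (div_lt_one (hq₀.trans hqr')).2 hqr'
  have hM₀ : 0 ≤ M := (norm_nonneg _).trans (hM frequently_large.exists.choose)
  obtain ⟨m, hm⟩ := exists_mul_rpow_lt_mul (c := δ ^ q.toReal / 2) (by positivity) hθ
    (β ^ q.toReal * (M ^ r.toReal + 1) ^ (q.toReal / r.toReal))
  obtain ⟨y, hy, hy₁, hy₂⟩ := exists_norm_rpow_le_and_le_norm_rpow hr hq
    (l := l ⊓ 𝓟 large) huY hM
    (fun i ↦ (hY _ (huY i)).trans (mul_le_mul_of_nonneg_left (hM i) hβ)) hδ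
    (eventually_inf_principal.2 (.of_forall fun i hi ↦ hi))
    (fun a ↦ (hu₁ a).mono_left inf_le_left) (fun a ↦ (hu₂ a).mono_left inf_le_left) m
  refine hm.not_ge (hy₂.trans ?_)
  calc ‖y.2‖ ^ q.toReal ≤ (β * ‖y.1‖) ^ q.toReal := by gcongr; exact hY y hy
    _ = β ^ q.toReal * (‖y.1‖ ^ r.toReal) ^ (q.toReal / r.toReal) := by
        rw [Real.mul_rpow hβ (norm_nonneg _), ← Real.rpow_mul (norm_nonneg _),
          mul_div_cancel₀ _ (hq₀.trans hqr').ne']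
    _ ≤ β ^ q.toReal * (m * (M ^ r.toReal + 1)) ^ (q.toReal / r.toReal) := by gcongr
    _ = _ := by rw [Real.mul_rpow (by positivity) (by positivity)]; ring

theorem totallyBounded_range_snd (hr : r ≠ ⊤) (hqr : q < r)
    {Y : Submodule ℝ (lp (fun _ : α ↦ ℝ) r × lp (fun _ : α ↦ ℝ) q)} {β : ℝ} (hβ : 0 ≤ β)
    (hY : ∀ y ∈ Y, ‖y.2‖ ≤ β * ‖y.1‖)
    {u : ι → lp (fun _ : α ↦ ℝ) r × lp (fun _ : α ↦ ℝ) q} (huY : ∀ i, u i ∈ Y) {M : ℝ}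
    (hM : ∀ i, ‖(u i).1‖ ≤ M) : TotallyBounded (Set.range fun i ↦ (u i).2) := by
  have hr₀ : r ≠ 0 := (zero_lt_one.trans_le Fact.out).ne'
  have hq₀ : q ≠ 0 := (zero_lt_one.trans_le Fact.out).ne'
  refine totallyBounded_iff_ultrafilter.2 fun f hf ↦ ?_
  rw [le_principal_iff, ← Set.image_univ] at hf
  rw [← Ultrafilter.ofComapInfPrincipal_eq_of_map hf]
  set g := Ultrafilter.ofComapInfPrincipal hf
  have differences_tendsto {c : ι → ℝ} {R : ℝ} (hc : ∀ i, ‖c i‖ ≤ R) :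
      Tendsto (fun i : ι × ι ↦ c i.1 - c i.2) (g ×ˢ g) (𝓝 0) := by
    obtain ⟨x, -, hx⟩ := (isCompact_closedBall (0 : ℝ) R).ultrafilter_le_nhds (g.map c)
      (tendsto_principal.2 (.of_forall fun i ↦ mem_closedBall_zero_iff.2 (hc i)))
    simpa using (Tendsto.comp hx tendsto_fst).sub (Tendsto.comp hx tendsto_snd)
  have bound (i : ι) : ‖(u i).2‖ ≤ β * M :=
    (hY _ (huY i)).trans (mul_le_mul_of_nonneg_left (hM i) hβ)
  refine cauchy_map_iff.2 ⟨inferInstance, tendsto_uniformity_iff_dist_tendsto_zero.2 ?_⟩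
  simp only [dist_eq_norm]
  exact tendsto_norm_snd_zero hr hqr hβ hY (u := fun i : ι × ι ↦ u i.1 - u i.2)
    (fun i ↦ Y.sub_mem (huY _) (huY _)) (M := M + M)
    (fun i ↦ (norm_sub_le _ _).trans (add_le_add (hM _) (hM _)))
    (fun a ↦ differences_tendsto fun i ↦ (lp.norm_apply_le_norm hr₀ _ a).trans (hM i))
    (fun a ↦ differences_tendsto fun i ↦ (lp.norm_apply_le_norm hq₀ _ a).trans (bound i))

theorem exists_finset_sum_rpow_le_of_totallyBounded (hq : q ≠ ⊤)
    {K : Set (lp (fun _ : α ↦ ℝ) q)} (hK : TotallyBounded K) {ε : ℝ} (hε : 0 < ε) :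
    ∃ s : Finset α, ∀ f ∈ K, ∀ t : Finset α, Disjoint t s →
      ∑ a ∈ t, ‖f a‖ ^ q.toReal ≤ ε ^ q.toReal := by
  classical
  have hq₀ : 0 < q.toReal := ENNReal.toReal_pos (zero_lt_one.trans_le Fact.out).ne' hq
  obtain ⟨net, hnet, hcover⟩ := Metric.totallyBounded_iff.1 hK (ε / 2) (half_pos hε)
  choose! s hs using fun g : lp (fun _ : α ↦ ℝ) q ↦
    summable_iff_vanishing_norm.1 (lp.hasSum_single hq g).summable (ε / 2) (half_pos hε)
  refine ⟨hnet.toFinset.biUnion s, fun f hf t ht ↦ ?_⟩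
  obtain ⟨g, hg, hfg⟩ := Set.mem_iUnion₂.1 (hcover hf)
  have net_small : ‖∑ a ∈ t, lp.single q a (g a)‖ < ε / 2 :=
    hs g t (ht.mono_right (Finset.subset_biUnion_of_mem s (hnet.mem_toFinset.2 hg)))
  have difference_small : ‖∑ a ∈ t, lp.single q a ((f - g) a)‖ ≤ ‖f - g‖ := by
    rw [← Real.rpow_le_rpow_iff (norm_nonneg _) (norm_nonneg _) hq₀, lp.norm_sum_single hq₀]
    exact lp.sum_rpow_le_norm_rpow hq₀ _ t
  rw [← lp.norm_sum_single hq₀]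
  gcongr
  calc ‖∑ a ∈ t, lp.single q a (f a)‖ =
        ‖∑ a ∈ t, lp.single q a ((f - g) a) + ∑ a ∈ t, lp.single q a (g a)‖ := by
        rw [← Finset.sum_add_distrib]
        simp only [← lp.single_add, lp.coeFn_sub, Pi.sub_apply, sub_add_cancel]
    _ ≤ ‖f - g‖ + ‖∑ a ∈ t, lp.single q a (g a)‖ :=
        (norm_add_le _ _).trans (add_le_add_left difference_small _)
    _ ≤ ε := by linarith [mem_ball_iff_norm.1 hfg]

theorem exists_finset_sum_norm_snd_rpow_le (hr : r ≠ ⊤) (hqr : q < r)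
    {Y : Submodule ℝ (lp (fun _ : α ↦ ℝ) r × lp (fun _ : α ↦ ℝ) q)} {β : ℝ} (hβ : 0 ≤ β)
    (hY : ∀ y ∈ Y, ‖y.2‖ ≤ β * ‖y.1‖) {ε : ℝ} (hε : 0 < ε) :
    ∃ s : Finset α, ∀ y ∈ Y, ∀ t : Finset α, Disjoint t s →
      ∑ a ∈ t, ‖y.2 a‖ ^ q.toReal ≤ (ε * ‖y.1‖) ^ q.toReal := by
  have bounded := totallyBounded_range_snd hr hqr hβ hY
    (u := fun y : {y // y ∈ Y ∧ ‖y.1‖ ≤ 1} ↦ y.1) (fun y ↦ y.2.1) fun y ↦ y.2.2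
  obtain ⟨s, hs⟩ := exists_finset_sum_rpow_le_of_totallyBounded hqr.ne_top bounded hε
  refine ⟨s, fun y hy t ht ↦ ?_⟩
  have unit : ‖(‖y.1‖⁻¹ • y).1‖ ≤ 1 := by
    rw [Prod.smul_fst, norm_smul, norm_inv, norm_norm]
    exact inv_mul_le_one
  have homogeneity (a : α) : y.2 a = ‖y.1‖ * (‖y.1‖⁻¹ • y).2 a := by
    rcases eq_or_ne ‖y.1‖ 0 with h | h
    · have : y.2 = 0 := norm_le_zero_iff.1 (by simpa [h] using hY y hy)
      simp [this]
    · simp [mul_inv_cancel_left₀ h]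
  calc ∑ a ∈ t, ‖y.2 a‖ ^ q.toReal
      = ‖y.1‖ ^ q.toReal * ∑ a ∈ t, ‖(‖y.1‖⁻¹ • y).2 a‖ ^ q.toReal := by
        rw [Finset.mul_sum]
        refine Finset.sum_congr rfl fun a _ ↦ ?_
        rw [homogeneity, norm_mul, norm_norm, Real.mul_rpow (norm_nonneg _) (norm_nonneg _)]
    _ ≤ ‖y.1‖ ^ q.toReal * ε ^ q.toReal := by
        gcongr
        exact hs _ ⟨⟨_, Y.smul_mem _ hy, unit⟩, rfl⟩ t ht
    _ = (ε * ‖y.1‖) ^ q.toReal := by rw [mul_comm, Real.mul_rpow hε.le (norm_nonneg _)]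

end GlidingHump

/-! ### Factorization through `ℓ_p` -/

section Gluing

/-- The direct sum of the linear maps `T k`, acting on families indexed by a sigma type. -/
def blockMap {K : Type*} {γ δ : K → Type*} (T : ∀ k, (γ k → ℝ) →ₗ[ℝ] (δ k → ℝ)) :
    ((Σ k, γ k) → ℝ) →ₗ[ℝ] ((Σ k, δ k) → ℝ) where
  toFun x z := T z.1 (fun i ↦ x ⟨z.1, i⟩) z.2
  map_add' x y := by
    ext z
    exact congrFun (map_add (T z.1) (fun i ↦ x ⟨z.1, i⟩) fun i ↦ y ⟨z.1, i⟩) z.2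
  map_smul' c x := by
    ext z
    exact congrFun (map_smul (T z.1) c fun i ↦ x ⟨z.1, i⟩) z.2

theorem blockMap_mk {K : Type*} {γ δ : K → Type*} (T : ∀ k, (γ k → ℝ) →ₗ[ℝ] (δ k → ℝ))
    (x : (Σ k, γ k) → ℝ) (k : K) (j : δ k) :
    blockMap T x ⟨k, j⟩ = T k (fun i ↦ x ⟨k, i⟩) j := rfl

theorem leftInverse_blockMap {K : Type*} {γ δ : K → Type*} {S : ∀ k, (δ k → ℝ) →ₗ[ℝ] (γ k → ℝ)}
    {T : ∀ k, (γ k → ℝ) →ₗ[ℝ] (δ k → ℝ)} (h : ∀ k, Function.LeftInverse (S k) (T k)) :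
    Function.LeftInverse (blockMap S) (blockMap T) := fun x ↦ by
  ext z
  exact congrFun (h z.1 fun i ↦ x ⟨z.1, i⟩) z.2

theorem sum_le_sum_image_fst_sum {K : Type*} [DecidableEq K] {δ : K → Type*} [∀ k, Fintype (δ k)]
    {g : (Σ k, δ k) → ℝ} (hg : ∀ z, 0 ≤ g z) (s : Finset (Σ k, δ k)) :
    ∑ z ∈ s, g z ≤ ∑ k ∈ s.image Sigma.fst, ∑ j, g ⟨k, j⟩ := by
  rw [Finset.sum_sigma']
  exact Finset.sum_le_sum_of_subset_of_nonneg
    (fun z hz ↦ by simpa using ⟨z.2, hz⟩) fun z _ _ ↦ hg z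

theorem sum_pow_one_half_le_two (s : Finset ℕ) : ∑ k ∈ s, (1 / 2 : ℝ) ^ k ≤ 2 :=
  (summable_geometric_two.sum_le_tsum s fun _ _ ↦ by positivity).trans_eq tsum_geometric_two

section Bounds

variable {γ δ : ℕ → Type*} [∀ k, Fintype (γ k)] [∀ k, Fintype (δ k)] {C D R : ℝ}
  {w : (Σ k, γ k) → ℝ} {a : ∀ k, (γ k → ℝ) →ₗ[ℝ] (δ k → ℝ)} {b : ∀ k, (δ k → ℝ) →ₗ[ℝ] (γ k → ℝ)}

theorem sum_abs_blockMap_rpow_le (hp : 1 ≤ p) (hC : 0 ≤ C) (hD : 0 ≤ D) (hR : 0 ≤ R)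
    (hab : ∀ k, IsLpFactorization p C (fun i ↦ 2 ^ k * w ⟨k, i⟩) (a k) (b k))
    {x : (Σ k, γ k) → ℝ} (hx : ∀ s : Finset (Σ k, γ k), ∑ z ∈ s, |x z| ^ p ≤ R ^ p)
    (hx₂ : ∀ k, ∑ i, (2 ^ k * w ⟨k, i⟩ * x ⟨k, i⟩) ^ 2 ≤ (D * (1 / 2) ^ k * R) ^ 2)
    (s : Finset (Σ k, δ k)) :
    ∑ z ∈ s, |blockMap a x z| ^ p ≤ C * (1 + 2 * D ^ p) * R ^ p := by
  classical
  have block_two (k : ℕ) : (∑ i, (2 ^ k * w ⟨k, i⟩ * x ⟨k, i⟩) ^ 2) ^ (p / 2) ≤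
      (1 / 2) ^ k * (D ^ p * R ^ p) := by
    have hk : ((1 / 2 : ℝ) ^ k) ^ p ≤ (1 / 2) ^ k :=
      Real.rpow_le_self_of_le_one (by positivity) (pow_le_one₀ (by norm_num) (by norm_num)) hp
    calc _ ≤ ((D * (1 / 2) ^ k * R) ^ 2) ^ (p / 2) := by gcongr; exact hx₂ k
      _ = ((1 / 2) ^ k) ^ p * (D ^ p * R ^ p) := by
        rw [← Real.rpow_two, ← Real.rpow_mul (by positivity), mul_div_cancel₀ p two_ne_zero,
          Real.mul_rpow (by positivity) hR, Real.mul_rpow hD (by positivity)]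
        ring
      _ ≤ _ := by gcongr
  calc ∑ z ∈ s, |blockMap a x z| ^ p
      ≤ ∑ k ∈ s.image Sigma.fst, ∑ j, |blockMap a x ⟨k, j⟩| ^ p :=
        sum_le_sum_image_fst_sum (fun z ↦ by positivity) s
    _ ≤ ∑ k ∈ s.image Sigma.fst, C * (∑ i, |x ⟨k, i⟩| ^ p + (1 / 2) ^ k * (D ^ p * R ^ p)) := by
        simp only [blockMap_mk]
        refine Finset.sum_le_sum fun k _ ↦
          ((hab k).sum_abs_rpow_le fun i ↦ x ⟨k, i⟩).trans ?_
        gcongr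
        exact block_two k
    _ = C * (∑ k ∈ s.image Sigma.fst, ∑ i, |x ⟨k, i⟩| ^ p +
          (∑ k ∈ s.image Sigma.fst, (1 / 2) ^ k) * (D ^ p * R ^ p)) := by
        rw [← Finset.mul_sum, Finset.sum_add_distrib, Finset.sum_mul]
    _ ≤ C * (R ^ p + 2 * (D ^ p * R ^ p)) := by
        gcongr
        · rw [Finset.sum_sigma']
          exact hx _
        · exact sum_pow_one_half_le_two _
    _ = _ := by ring

theorem sum_abs_blockMap_symm_rpow_le (hC : 0 ≤ C)
    (hab : ∀ k, IsLpFactorization p C (fun i ↦ 2 ^ k * w ⟨k, i⟩) (a k) (b k))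
    {f : (Σ k, δ k) → ℝ} (hf : ∀ s : Finset (Σ k, δ k), ∑ z ∈ s, |f z| ^ p ≤ R ^ p)
    (s : Finset (Σ k, γ k)) :
    ∑ z ∈ s, |blockMap b f z| ^ p ≤ C * R ^ p := by
  classical
  calc ∑ z ∈ s, |blockMap b f z| ^ p
      ≤ ∑ k ∈ s.image Sigma.fst, ∑ j, |blockMap b f ⟨k, j⟩| ^ p :=
        sum_le_sum_image_fst_sum (fun z ↦ by positivity) s
    _ ≤ ∑ k ∈ s.image Sigma.fst, C * ∑ j, |f ⟨k, j⟩| ^ p :=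
        Finset.sum_le_sum fun k _ ↦ (hab k).sum_abs_symm_rpow_le fun j ↦ f ⟨k, j⟩
    _ ≤ C * R ^ p := by
        rw [← Finset.mul_sum, Finset.sum_sigma']
        gcongr
        exact hf _

theorem sum_sq_blockMap_symm_le (hp : 0 < p) (hR : 0 ≤ R)
    (hab : ∀ k, IsLpFactorization p C (fun i ↦ 2 ^ k * w ⟨k, i⟩) (a k) (b k))
    {f : (Σ k, δ k) → ℝ} (hf : ∀ s : Finset (Σ k, δ k), ∑ z ∈ s, |f z| ^ p ≤ R ^ p)
    (s : Finset (Σ k, γ k)) :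
    ∑ z ∈ s, (w z * blockMap b f z) ^ 2 ≤ 2 * R ^ 2 := by
  classical
  have block (k : ℕ) : ∑ i, (w ⟨k, i⟩ * blockMap b f ⟨k, i⟩) ^ 2 ≤ (1 / 2) ^ k * R ^ 2 := by
    have whole_block : ∑ j, |f ⟨k, j⟩| ^ p ≤ R ^ p := by
      simpa using hf (Finset.univ.map (Function.Embedding.sigmaMk k))
    calc ∑ i, (w ⟨k, i⟩ * blockMap b f ⟨k, i⟩) ^ 2
        = ((1 / 2) ^ k) ^ 2 * ∑ i, (2 ^ k * w ⟨k, i⟩ * blockMap b f ⟨k, i⟩) ^ 2 := by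
          rw [Finset.mul_sum]
          refine Finset.sum_congr rfl fun i _ ↦ ?_
          rw [← mul_pow, ← mul_assoc, ← mul_assoc, ← mul_pow]
          norm_num
      _ ≤ (1 / 2) ^ k * (∑ j, |f ⟨k, j⟩| ^ p) ^ (2 / p) := by
          gcongr
          · exact pow_le_of_le_one (by positivity) (pow_le_one₀ (by norm_num) (by norm_num))
              two_ne_zero
          · exact (hab k).sum_sq_symm_le fun j ↦ f ⟨k, j⟩
      _ ≤ (1 / 2) ^ k * (R ^ p) ^ (2 / p) := by gcongr
      _ = (1 / 2) ^ k * R ^ 2 := by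
          rw [← Real.rpow_mul hR, mul_div_cancel₀ _ hp.ne', Real.rpow_two]
  calc ∑ z ∈ s, (w z * blockMap b f z) ^ 2
      ≤ ∑ k ∈ s.image Sigma.fst, ∑ i, (w ⟨k, i⟩ * blockMap b f ⟨k, i⟩) ^ 2 :=
        sum_le_sum_image_fst_sum (fun z ↦ by positivity) s
    _ ≤ ∑ k ∈ s.image Sigma.fst, (1 / 2) ^ k * R ^ 2 := Finset.sum_le_sum fun k _ ↦ block k
    _ ≤ 2 * R ^ 2 := by
        rw [← Finset.sum_mul]
        gcongr
        exact sum_pow_one_half_le_two _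

end Bounds

theorem exists_continuousLinearMap_lp {E α : Type*} [SeminormedAddCommGroup E] [NormedSpace ℝ E]
    {q : ℝ≥0∞} [Fact (1 ≤ q)] (hq : q ≠ ⊤) (L : E →ₗ[ℝ] (α → ℝ)) {C : ℝ} (hC : 0 ≤ C)
    (hL : ∀ x (s : Finset α), ∑ i ∈ s, |L x i| ^ q.toReal ≤ C * ‖x‖ ^ q.toReal) :
    ∃ T : E →L[ℝ] lp (fun _ : α ↦ ℝ) q, ∀ x, ⇑(T x) = L x := by
  have hq₀ : 0 < q.toReal := ENNReal.toReal_pos (zero_lt_one.trans_le Fact.out).ne' hq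
  let T : E →ₗ[ℝ] lp (fun _ : α ↦ ℝ) q :=
    { toFun x := ⟨L x, memℓp_gen' (hL x)⟩
      map_add' x y := Subtype.ext (map_add L x y)
      map_smul' c x := Subtype.ext (map_smul L c x) }
  refine ⟨T.mkContinuous (C ^ (1 / q.toReal)) fun x ↦ ?_, fun x ↦ rfl⟩
  refine lp.norm_le_of_forall_sum_le hq₀ (by positivity) fun s ↦ (hL x s).trans_eq ?_
  rw [Real.mul_rpow (by positivity) (norm_nonneg x), ← Real.rpow_mul hC,
    one_div_mul_cancel hq₀.ne', Real.rpow_one]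

theorem exists_finite_fiber_index (N : ℕ → ℕ) :
    ∃ κ : ℕ → ℕ, (∀ k, {i | κ i = k}.Finite) ∧ ∀ i, κ i ≠ 0 → N (κ i) ≤ i := by
  refine ⟨fun i ↦ Nat.findGreatest (fun k ↦ N k ≤ i) i, fun k ↦ ?_, fun i hi ↦
    Nat.findGreatest_of_ne_zero (P := fun k ↦ N k ≤ i) rfl hi⟩
  refine (Set.finite_lt_nat (max (k + 1) (N (k + 1)))).subset fun i hi ↦ ?_
  by_contra! large
  have le_index := Nat.le_findGreatest (P := fun k ↦ N k ≤ i)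
    (le_of_max_le_left (not_lt.1 large)) (le_of_max_le_right (not_lt.1 large))
  have index_eq : Nat.findGreatest (fun k ↦ N k ≤ i) i = k := hi
  omega

end Gluing

section FactorizationThroughLp

theorem Xpw.pair_snd_apply (x : Xpw p w) (n : ℕ) : (Xpw.pair x).2 n = w n * seq x n :=
  (show XpwMod p w from x).2 n

theorem Xpw.eq_of_seq_eq {x y : Xpw p w} (h : seq x = seq y) : x = y := by
  refine Subtype.ext (Prod.ext (lp.ext h) (lp.ext (funext fun n ↦ ?_)))
  exact (x.pair_snd_apply n).trans (by rw [h, ← y.pair_snd_apply n]; rfl)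

theorem sum_abs_rpow_le_norm_rpow (hp : 0 < p) (f : SeqP p) (s : Finset ℕ) :
    ∑ i ∈ s, |f i| ^ p ≤ ‖f‖ ^ p := by
  have hp' : (ENNReal.ofReal p).toReal = p := ENNReal.toReal_ofReal hp.le
  simpa only [hp', Real.norm_eq_abs] using lp.sum_rpow_le_norm_rpow (by rwa [hp']) f s

theorem Xpw.sum_sq_le_nrm2_sq (x : Xpw p w) (s : Finset ℕ) :
    ∑ i ∈ s, (w i * seq x i) ^ 2 ≤ nrm2 x ^ 2 := by
  have := lp.sum_rpow_le_norm_rpow (by norm_num) (Xpw.pair x).2 s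
  simp only [x.pair_snd_apply, ENNReal.toReal_ofNat, Real.rpow_two, Real.norm_eq_abs, sq_abs]
    at this
  exact this

variable [Fact (1 ≤ ENNReal.ofReal p)]

/-- The inclusion of `X_{p,w}` in `ℓ_p ⊕_∞ ℓ_2`, that is, `Xpw.pair` as a bounded operator. -/
def Xpw.pairL : Xpw p w →L[ℝ] SeqP p × Seq2 := (XpwMod p w).subtypeL

theorem exists_continuousLinearMap_xpw {E : Type*} [NormedAddCommGroup E] [NormedSpace ℝ E]
    (hp : 0 < p) (L : E →ₗ[ℝ] (ℕ → ℝ)) {C D : ℝ} (hC : 0 ≤ C) (hD : 0 ≤ D)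
    (hL : ∀ x (s : Finset ℕ), ∑ i ∈ s, |L x i| ^ p ≤ C * ‖x‖ ^ p)
    (hL₂ : ∀ x (s : Finset ℕ), ∑ i ∈ s, (w i * L x i) ^ 2 ≤ D * ‖x‖ ^ 2) :
    ∃ T : E →L[ℝ] Xpw p w, ∀ x, seq (T x) = L x := by
  obtain ⟨T₁, hT₁⟩ := exists_continuousLinearMap_lp (q := ENNReal.ofReal p) ENNReal.ofReal_ne_top
    L hC (by simpa only [ENNReal.toReal_ofReal hp.le] using hL)
  obtain ⟨T₂, hT₂⟩ := exists_continuousLinearMap_lp (q := 2) ENNReal.ofNat_ne_top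
    (LinearMap.mulLeft ℝ w ∘ₗ L) hD fun x s ↦ by
      simp only [ENNReal.toReal_ofNat, Real.rpow_two, sq_abs]
      exact hL₂ x s
  refine ⟨(T₁.prod T₂).codRestrict (XpwMod p w) fun x n ↦ ?_, hT₁⟩
  exact (congrFun (hT₂ x) n).trans (congrArg (w n * ·) (congrFun (hT₁ x) n).symm)

theorem exists_blocks_sum_sq_le (hp : 2 < p) {Y : Submodule ℝ (Xpw p w)} {D : ℝ} (hD : 1 ≤ D)
    (hY : ∀ y ∈ Y, nrm2 y ≤ D * nrmP y) :
    ∃ κ : ℕ → ℕ, (∀ k, {i | κ i = k}.Finite) ∧ ∀ y ∈ Y, ∀ k, ∀ s : Finset ℕ, (∀ i ∈ s, κ i = k) →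
      ∑ i ∈ s, (2 ^ k * w i * seq y i) ^ 2 ≤ (D * (1 / 2) ^ k * nrmP y) ^ 2 := by
  have hY' : ∀ z ∈ Y.map (Xpw.pairL (p := p) (w := w)).toLinearMap, ‖z.2‖ ≤ D * ‖z.1‖ := by
    rintro _ ⟨y, hy, rfl⟩
    exact hY y hy
  have two_lt : (2 : ℝ≥0∞) < ENNReal.ofReal p := by
    rwa [← ENNReal.ofReal_ofNat 2, ENNReal.ofReal_lt_ofReal_iff (by linarith)]
  choose S hS using fun k : ℕ ↦ exists_finset_sum_norm_snd_rpow_le ENNReal.ofReal_ne_top two_lt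
    (by positivity) hY' (show (0 : ℝ) < (1 / 4) ^ k by positivity)
  obtain ⟨κ, finite, hκ⟩ := exists_finite_fiber_index fun k ↦ (S k).sup id + 1
  refine ⟨κ, finite, fun y hy k s hs ↦ ?_⟩
  have tail : ∑ i ∈ s, (w i * seq y i) ^ 2 ≤ (D * (1 / 4) ^ k * nrmP y) ^ 2 := by
    obtain rfl | hk := eq_or_ne k 0
    · simpa using (y.sum_sq_le_nrm2_sq s).trans
        (pow_le_pow_left₀ (norm_nonneg _) (hY y hy) 2)
    · have disjoint : Disjoint s (S k) := Finset.disjoint_left.2 fun i hi hiS ↦ by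
        have large := hκ i (by rwa [hs i hi])
        rw [hs i hi] at large
        exact (Nat.lt_of_succ_le large).not_ge (Finset.le_sup (f := id) hiS)
      have h := hS k (Xpw.pairL y) (Submodule.mem_map_of_mem hy) s disjoint
      have coord (i : ℕ) : (Xpw.pairL y).2 i = w i * seq y i := y.pair_snd_apply i
      simp only [coord, ENNReal.toReal_ofNat, Real.rpow_two, Real.norm_eq_abs, sq_abs] at h
      refine h.trans (pow_le_pow_left₀ (by positivity) ?_ 2)
      exact mul_le_mul_of_nonneg_right (le_mul_of_one_le_left (by positivity) hD) (norm_nonneg _)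
  calc ∑ i ∈ s, (2 ^ k * w i * seq y i) ^ 2
      = (2 ^ k) ^ 2 * ∑ i ∈ s, (w i * seq y i) ^ 2 := by
        simp only [mul_assoc, mul_pow, Finset.mul_sum]
    _ ≤ (2 ^ k) ^ 2 * (D * (1 / 4) ^ k * nrmP y) ^ 2 := by gcongr
    _ = (D * (1 / 2) ^ k * nrmP y) ^ 2 := by
        rw [← mul_pow, show (1 / 2 : ℝ) = 2 * (1 / 4) by norm_num, mul_pow (2 : ℝ)]
        ring

section BlockMaps

variable {γ δ : ℕ → Type*} [∀ k, Fintype (γ k)] [∀ k, Fintype (δ k)] {C D : ℝ}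
  {a : ∀ k, (γ k → ℝ) →ₗ[ℝ] (δ k → ℝ)} {b : ∀ k, (δ k → ℝ) →ₗ[ℝ] (γ k → ℝ)}
  (eγ : (Σ k, γ k) ≃ ℕ) (eδ : (Σ k, δ k) ≃ ℕ)

theorem exists_continuousLinearMap_blockMap (hp : 1 ≤ p) (hC : 0 ≤ C) (hD : 0 ≤ D)
    (hab : ∀ k, IsLpFactorization p C (fun i ↦ 2 ^ k * w (eγ ⟨k, i⟩)) (a k) (b k))
    {Y : Submodule ℝ (Xpw p w)}
    (hY : ∀ y ∈ Y, ∀ k, ∑ i, (2 ^ k * w (eγ ⟨k, i⟩) * seq y (eγ ⟨k, i⟩)) ^ 2 ≤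
      (D * (1 / 2) ^ k * nrmP y) ^ 2) :
    ∃ A : Y →L[ℝ] SeqP p, ∀ y : Y, ⇑(A y) = blockMap a (seq y.1 ∘ eγ) ∘ eδ.symm := by
  have hp₀ : 0 < p := by linarith
  let seqL : Y →ₗ[ℝ] (ℕ → ℝ) :=
    { toFun y := seq y.1
      map_add' _ _ := rfl
      map_smul' _ _ := rfl }
  refine exists_continuousLinearMap_lp (q := ENNReal.ofReal p) ENNReal.ofReal_ne_top
    (LinearMap.funLeft ℝ ℝ eδ.symm ∘ₗ blockMap a ∘ₗ LinearMap.funLeft ℝ ℝ eγ ∘ₗ seqL)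
    (show 0 ≤ C * (1 + 2 * D ^ p) by positivity) fun y s ↦ ?_
  have sum_seq_le (t : Finset (Σ k, γ k)) : ∑ z ∈ t, |seq y.1 (eγ z)| ^ p ≤ nrmP y.1 ^ p := by
    have := sum_abs_rpow_le_norm_rpow hp₀ (Xpw.pair y.1).1 (t.map eγ)
    rwa [Finset.sum_map] at this
  have block_le := sum_abs_blockMap_rpow_le (w := w ∘ eγ) hp hC hD (norm_nonneg _) hab sum_seq_le
    (hY y y.2) (s.map eδ.symm)
  rw [Finset.sum_map] at block_le
  rw [ENNReal.toReal_ofReal hp₀.le]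
  refine block_le.trans ?_
  gcongr
  exact le_max_left _ _

theorem exists_continuousLinearMap_blockMap_symm (hp : 0 < p) (hC : 0 ≤ C)
    (hab : ∀ k, IsLpFactorization p C (fun i ↦ 2 ^ k * w (eγ ⟨k, i⟩)) (a k) (b k)) :
    ∃ B : SeqP p →L[ℝ] Xpw p w, ∀ f : SeqP p, seq (B f) = blockMap b (f ∘ eδ) ∘ eγ.symm := by
  let coords : SeqP p →ₗ[ℝ] (ℕ → ℝ) :=
    { toFun f := f
      map_add' _ _ := rfl
      map_smul' _ _ := rfl }
  have sum_coords_le (f : SeqP p) (t : Finset (Σ k, δ k)) :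
      ∑ z ∈ t, |f (eδ z)| ^ p ≤ ‖f‖ ^ p := by
    simpa using sum_abs_rpow_le_norm_rpow hp f (t.map eδ)
  refine exists_continuousLinearMap_xpw hp
    (LinearMap.funLeft ℝ ℝ eγ.symm ∘ₗ blockMap b ∘ₗ LinearMap.funLeft ℝ ℝ eδ ∘ₗ coords)
    hC zero_le_two (fun f s ↦ ?_) fun f s ↦ ?_
  · have := sum_abs_blockMap_symm_rpow_le (w := w ∘ eγ) hC hab (sum_coords_le f) (s.map eγ.symm)
    rwa [Finset.sum_map] at this
  · have := sum_sq_blockMap_symm_le (w := w ∘ eγ) hp (norm_nonneg f) hab (sum_coords_le f)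
      (s.map eγ.symm)
    simp only [Finset.sum_map, Function.comp_apply, Equiv.coe_toEmbedding,
      Equiv.apply_symm_apply] at this
    exact this

end BlockMaps

theorem exists_factorization_of_nrm2_le (hp : 2 < p) (hw : ∀ n, 0 < w n)
    {Y : Submodule ℝ (Xpw p w)} {D : ℝ} (hD : 1 ≤ D) (hY : ∀ y ∈ Y, nrm2 y ≤ D * nrmP y) :
    ∃ (A : Y →L[ℝ] SeqP p) (B : SeqP p →L[ℝ] Xpw p w), ∀ y, B (A y) = y := by
  obtain ⟨κ, finite, decay⟩ := exists_blocks_sum_sq_le hp hD hY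
  have : ∀ k, Fintype {i // κ i = k} := fun k ↦ (finite k).fintype
  obtain ⟨C, hC, factor⟩ := exists_isLpFactorization hp
  choose Ω _ _ a b hab using fun k ↦ factor (ι := {i // κ i = k}) (v := fun i ↦ 2 ^ k * w i)
    fun i ↦ mul_pos (by positivity) (hw i)
  let eκ : (Σ k, {i // κ i = k}) ≃ ℕ := Equiv.sigmaFiberEquiv κ
  obtain ⟨eΩ⟩ : Nonempty ((Σ k, Ω k) ≃ ℕ) := nonempty_equiv_of_countable
  obtain ⟨A, hA⟩ := exists_continuousLinearMap_blockMap eκ eΩ (by linarith) hC.le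
    (by linarith : 0 ≤ D) hab fun y hy k ↦ by
      have := decay y hy k (Finset.univ.map (Function.Embedding.subtype (κ · = k))) (by simp)
      rwa [Finset.sum_map] at this
  obtain ⟨B, hB⟩ := exists_continuousLinearMap_blockMap_symm eκ eΩ (by linarith) hC.le hab
  refine ⟨A, B, fun y ↦ Xpw.eq_of_seq_eq ?_⟩
  rw [hB, hA, Function.comp_assoc, eΩ.symm_comp_self, Function.comp_id,
    leftInverse_blockMap (fun k ↦ (hab k).leftInverse), Function.comp_assoc, eκ.self_comp_symm,
    Function.comp_id]

end FactorizationThroughLp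

/-! ### Splitting off the Hilbert part -/

section OrthogonalSplitting

variable {E G H : Type*} [NormedAddCommGroup E] [NormedSpace ℝ E] [NormedAddCommGroup G]
  [NormedSpace ℝ G] [NormedAddCommGroup H] [InnerProductSpace ℝ H]

theorem exists_leftInverse_sub_mem_orthogonal [CompleteSpace E] [CompleteSpace H]
    {J : E →L[ℝ] H} {K : NNReal} (hJ : AntilipschitzWith K J) :
    ∃ R : H →L[ℝ] E, Function.LeftInverse R J ∧ ∀ h, h - J (R h) ∈ J.rangeᗮ := by
  have closed_range : IsClosed (Set.range J) := hJ.isClosed_range J.uniformContinuous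
  have : CompleteSpace J.range :=
    (show IsClosed (J.range : Set H) from closed_range).completeSpace_coe
  let e : E ≃L[ℝ] J.range := J.equivRange hJ.injective closed_range
  have J_symm (h : J.range) : J (e.symm h) = h := congrArg Subtype.val (e.apply_symm_apply h)
  refine ⟨(e.symm : J.range →L[ℝ] E).comp J.range.orthogonalProjectionOnto, fun x ↦ ?_, fun h ↦ ?_⟩
  · have : J.range.orthogonalProjectionOnto (J x) = e x :=
      J.range.orthogonalProjectionOnto_mem_subspace_eq_self (e x)
    simp [this]
  · simp only [ContinuousLinearMap.comp_apply, ContinuousLinearEquiv.coe_coe, J_symm]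
    exact Submodule.sub_starProjection_mem_orthogonal (K := J.range) h

theorem norm_le_mul_norm_of_mem_topologicalClosure {T : E →L[ℝ] H} {Z : Submodule ℝ E} {c : ℝ}
    (hZ : ∀ z ∈ Z, ‖z‖ ≤ c * ‖T z‖) {z : E} (hz : z ∈ Z.topologicalClosure) :
    ‖z‖ ≤ c * ‖T z‖ :=
  closure_minimal (t := {z | ‖z‖ ≤ c * ‖T z‖}) hZ
    (isClosed_le continuous_norm (T.continuous.norm.const_mul c)) hz

theorem exists_hasLeftInverse_of_bounded_below [CompleteSpace E] [CompleteSpace H] {T : E →L[ℝ] H}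
    {X Z : Submodule ℝ E} (hX : X.ClosedComplemented) (hZX : Z ≤ X) {c : NNReal}
    (hZ : ∀ z ∈ Z, ‖z‖ ≤ c * ‖T z‖)
    {Y : Submodule ℝ E} (hY : X ⊓ (Z.map T.toLinearMap)ᗮ.comap T.toLinearMap ≤ Y)
    {A : Y →L[ℝ] G} {B : G →L[ℝ] E} (hAB : ∀ y, B (A y) = y) :
    ∃ F : X →L[ℝ] G × H, F.HasLeftInverse := by
  let W := Z.topologicalClosure
  have hWX : W ≤ X := Z.topologicalClosure_minimal hZX hX.isClosed
  have : CompleteSpace W := Z.isClosed_topologicalClosure.completeSpace_coe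
  let J : W →L[ℝ] H := T.comp W.subtypeL
  obtain ⟨R, hRJ, hR⟩ := exists_leftInverse_sub_mem_orthogonal (J := J)
    (J.antilipschitz_of_bound fun z ↦ norm_le_mul_norm_of_mem_topologicalClosure hZ z.2)
  have map_le_range : Z.map T.toLinearMap ≤ J.range := by
    rintro _ ⟨z, hz, rfl⟩
    exact ⟨⟨z, Z.le_topologicalClosure hz⟩, rfl⟩
  let S : X →L[ℝ] W := R.comp (T.comp X.subtypeL)
  have sub_mem (x : X) : (x : E) - S x ∈ Y := by
    refine hY ⟨X.sub_mem x.2 (hWX (S x).2), ?_⟩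
    change T (x - S x) ∈ (Z.map T.toLinearMap)ᗮ
    rw [map_sub]
    exact Submodule.orthogonal_le map_le_range (hR (T x))
  obtain ⟨Q, hQ⟩ := hX
  let P : X →L[ℝ] Y := (X.subtypeL - W.subtypeL.comp S).codRestrict Y sub_mem
  refine ⟨(A.comp P).prod (T.comp (W.subtypeL.comp S)),
    Q.comp (B.coprod (W.subtypeL.comp R)), fun x ↦ ?_⟩
  have reconstruct : B (A (P x)) + R (J (S x)) = (x : E) := by
    rw [hAB, hRJ]
    exact sub_add_cancel _ _
  exact (congrArg Q reconstruct).trans (hQ x)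

theorem exists_closedComplemented_equiv_of_hasLeftInverse [CompleteSpace E] [CompleteSpace G]
    {F : E →L[ℝ] G} (hF : F.HasLeftInverse) :
    ∃ V : Submodule ℝ G, V.ClosedComplemented ∧ Nonempty (E ≃L[ℝ] V) :=
  ⟨F.range, hF.closedComplemented_range, ⟨F.equivRange hF.injective hF.isClosed_range⟩⟩

end OrthogonalSplitting

section RatioConditions

variable [Fact (1 ≤ ENNReal.ofReal p)]

theorem nrm2_le_mul_nrmP_of_ratio_le {x : Xpw p w} {β : ℝ} (hx : ratio x ≤ β) :
    nrm2 x ≤ β * nrmP x := by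
  obtain h₀ | h₀ := (norm_nonneg (Xpw.pair x).1).eq_or_lt'
  · have zero : x = 0 := Xpw.eq_of_seq_eq (by rw [seq, norm_eq_zero.1 h₀]; rfl)
    rw [zero]
    change ‖(0 : Seq2)‖ ≤ β * ‖(0 : SeqP p)‖
    simp
  · exact (div_le_iff₀ h₀).1 hx

instance : CompleteSpace (Xpw p w) := by
  have closed : IsClosed (XpwMod p w : Set (SeqP p × Seq2)) := by
    have coord_eq : (XpwMod p w : Set (SeqP p × Seq2)) = ⋂ n, {z | z.2 n = w n * z.1 n} :=
      Set.ext fun z ↦ by simp only [Set.mem_iInter]; rfl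
    rw [coord_eq]
    refine isClosed_iInter fun n ↦ isClosed_eq ?_ ?_
    · exact (lp.evalCLM ℝ (fun _ ↦ ℝ) 2 n).continuous.comp continuous_snd
    · exact ((lp.evalCLM ℝ (fun _ ↦ ℝ) _ n).continuous.comp continuous_fst).const_mul _
  exact closed.completeSpace_coe

/-- The operator `x ↦ w · x` from `X_{p,w}` to `ℓ_2`, whose norm at `x` is `|x|_2`. -/
def Xpw.toSeq2 : Xpw p w →L[ℝ] Seq2 := (ContinuousLinearMap.snd ℝ (SeqP p) Seq2).comp Xpw.pairL

theorem norm_le_max_mul_nrm2_of_le_ratio {x : Xpw p w} {β : ℝ} (hβ : 0 < β) (hx : β ≤ ratio x) :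
    ‖x‖ ≤ max β⁻¹ 1 * nrm2 x := by
  have nrm2_nonneg : 0 ≤ nrm2 x := norm_nonneg _
  have nrmP_pos : 0 < nrmP x := by
    refine (norm_nonneg _).lt_of_ne' fun h₀ ↦ ?_
    rw [ratio, nrmP, h₀, div_zero] at hx
    exact hx.not_gt hβ
  refine (Prod.norm_def (Xpw.pair x)).trans_le (max_le ?_ ?_)
  · calc nrmP x ≤ β⁻¹ * nrm2 x := by
          rw [inv_mul_eq_div, le_div_iff₀' hβ]
          exact (le_div_iff₀ nrmP_pos).1 hx
      _ ≤ _ := by gcongr; exact le_max_left _ _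
  · exact le_mul_of_one_le_left nrm2_nonneg (le_max_right _ _)

theorem ratio_le_of_mem_orthogonal {Z : Submodule ℝ (Xpw p w)} {x : Xpw p w} {ε β : ℝ} (hε : ε ≤ 1)
    (hx : Xpw.toSeq2 x ∈ (Z.map (Xpw.toSeq2 (p := p) (w := w)).toLinearMap)ᗮ)
    (hZ : β < ratio x → ∃ z ∈ Z, nrm2 (x - z) < ε * nrm2 x) : ratio x ≤ β := by
  by_contra! large
  obtain ⟨z, hz, near⟩ := hZ large
  have orthogonal : inner ℝ (Xpw.toSeq2 x) (Xpw.toSeq2 z) = 0 :=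
    Submodule.inner_left_of_mem_orthogonal (Submodule.mem_map_of_mem hz) hx
  have pythagoras := norm_sub_sq_real (Xpw.toSeq2 x) (Xpw.toSeq2 z)
  have : nrm2 x ≤ nrm2 (x - z) := by
    refine le_of_sq_le_sq ?_ (norm_nonneg _)
    change ‖Xpw.toSeq2 x‖ ^ 2 ≤ ‖Xpw.toSeq2 (x - z)‖ ^ 2
    rw [map_sub, pythagoras, orthogonal]
    linarith [sq_nonneg ‖Xpw.toSeq2 z‖]
  exact (near.trans_le (mul_le_of_le_one_left (norm_nonneg _) hε)).not_ge this

end RatioConditions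

theorem stmt13_general (p : ℝ) (hp : 2 < p) [Fact (1 ≤ ENNReal.ofReal p)]
    (w : ℕ → ℝ) (hw : ∀ n, 0 < w n)
    (X : Submodule ℝ (Xpw p w)) (hX : X.ClosedComplemented)
    (Z : Submodule ℝ (Xpw p w)) (hZX : Z ≤ X)
    (ε β β' : ℝ) (hε1 : ε ≤ 1) (hβ' : 0 < β')
    (ha : ∀ z ∈ Z, z ≠ 0 → ratio z ≥ β')
    (hb : ∀ x ∈ X, ratio x > β → ∃ z ∈ Z, nrm2 (x - z) < ε * nrm2 x) :
    ∃ V : Submodule ℝ (SeqP p × Seq2), V.ClosedComplemented ∧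
      Nonempty (↥X ≃L[ℝ] ↥V) := by
  let T : Xpw p w →L[ℝ] Seq2 := Xpw.toSeq2
  let Y : Submodule ℝ (Xpw p w) := X ⊓ (Z.map T.toLinearMap)ᗮ.comap T.toLinearMap
  have nrm2_le_on_Y : ∀ y ∈ Y, nrm2 y ≤ max β 1 * nrmP y := fun y hy ↦
    nrm2_le_mul_nrmP_of_ratio_le <|
      (ratio_le_of_mem_orthogonal hε1 hy.2 (hb y hy.1)).trans (le_max_left _ _)
  have norm_le_on_Z : ∀ z ∈ Z, ‖z‖ ≤ (max β'⁻¹ 1).toNNReal * ‖T z‖ := fun z hz ↦ by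
    rw [Real.coe_toNNReal _ (by positivity)]
    obtain rfl | hz₀ := eq_or_ne z 0
    · simp
    · exact norm_le_max_mul_nrm2_of_le_ratio hβ' (ha z hz hz₀)
  obtain ⟨A, B, hAB⟩ := exists_factorization_of_nrm2_le hp hw (le_max_right β 1) nrm2_le_on_Y
  obtain ⟨F, hF⟩ := exists_hasLeftInverse_of_bounded_below hX hZX norm_le_on_Z le_rfl hAB
  have : CompleteSpace X := hX.isClosed.completeSpace_coe
  exact exists_closedComplemented_equiv_of_hasLeftInverse hF

/-- Proposition 2.4, direct implication: let `X` be a complemented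
subspace of `X_p`, `Z` a subspace of `X`, and `ε, β, β' > 0` with `ε ≤ 1` such that
(a) `r(z) ≥ β'` for all nonzero `z ∈ Z` and (b) every `x ∈ X` with `r(x) > β` admits
`z ∈ Z` with `|x - z|_2 < ε |x|_2`.  Then `X` is isomorphic to a complemented subspace
of `ℓ_p ⊕ ℓ_2`. -/
theorem stmt13 (p : ℝ) (hp : 2 < p) [Fact (1 ≤ ENNReal.ofReal p)]
    (w : ℕ → ℝ) (hw : IsXpWeight p w)
    (X : Submodule ℝ (Xpw p w)) (hX : X.ClosedComplemented)
    (Z : Submodule ℝ (Xpw p w)) (hZX : Z ≤ X)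
    (ε β β' : ℝ) (hε0 : 0 < ε) (hε1 : ε ≤ 1) (hβ : 0 < β) (hβ' : 0 < β')
    (ha : ∀ z ∈ Z, z ≠ 0 → ratio z ≥ β')
    (hb : ∀ x ∈ X, ratio x > β → ∃ z ∈ Z, nrm2 (x - z) < ε * nrm2 x) :
    ∃ V : Submodule ℝ (SeqP p × Seq2), V.ClosedComplemented ∧
      Nonempty (↥X ≃L[ℝ] ↥V) :=
  stmt13_general p hp w hw.1 X hX Z hZX ε β β' hε1 hβ' ha hb
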